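/- arXiv:1911.10464 — 4 statements merged into one kernel-verified Lean document; each statement's English description precedes it below -/
import Mathlib

section
/- Let G be a Hajós graph and let (G1, G2) be a 5-separation in G such that |V(G1)| = 8, (G1, V(G1 ∩ G2)) is planar, and V(G1 ∩ G2) is an independent set in G1. Then G1 with S = V(G1 ∩ G2) is isomorphic (by an isomorphism carrying V(G1 ∩ G2) to S) to the 8-vertex obstruction graph O5, and the vertex of V(G1 ∩ G2) having three neighbors in V(G1) \ V(G1 ∩ G2) has degree at least 5 in G. -/
/-!
Write `S = V(G1 ∩ G2)`, `|S| = 5`, and `A = V(G1) \ V(G2)`, `|A| = 3`.  All neighbours of a vertex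
of `A` lie in `A ∪ S`, and everything is decided by the edges inside `A` and between `A` and `S`.
Two kinds of constraints on these edges are used.

*Planarity.*  Adding an apex joined to `S` leaves the graph without subdivisions of `K5` and
`K3,3`.  Four forbidden patterns come from explicit such subdivisions (`planar_share`,
`planar_share_third`, `planar_triangle_two`, `planar_triangle_one`); for instance, two vertices of
`A` share at most two neighbours in `S`.

*Minimality.*  A graph with fewer vertices and no `K5`-subdivision is 4-colourable.  Deleting a
vertex gives minimum degree four (`hajos_degree`).  Deleting two or three vertices of `A` and adding
one, two or three edges between the remaining vertices also yields no new `K5`-subdivision, since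
the added edges can be rerouted through the deleted vertices: along a path (`hajos_path`), along two
paths meeting in an end (`hajos_two_paths`), or at a vertex that takes over the role of a branch
vertex (`hajos_star`, through `K5_split`).  The resulting 4-colouring separates the ends of the
added edges, and it must not extend to the deleted vertices.

`Cfg` collects these constraints.  By counting neighbours in `S`, the set `A` spans neither no edge
(`Cfg.no_edge`) nor exactly one edge (`Cfg.one_edge`) nor a triangle (`Cfg.no_triangle`).  If it
spans a path `a b c`, the neighbourhoods in `S` are forced to be those of `O5` (`Cfg.path`).
Finally, if the vertex `y` of `S` adjacent to `a`, `b` and `c` had at most one further neighbour,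
every 4-colouring of `G - y` could be changed on `y, a, b, c` to a 4-colouring of `G`
(`IsO5.degree`).
-/

open SimpleGraph

/-- The internal vertices of a walk: its support with the two endpoints removed. -/
def walkInterior {V : Type} {G : SimpleGraph V} {u v : V} (p : G.Walk u v) : List V :=
  p.support.tail.dropLast

/-- `G` contains a subdivision of `K5`: five branch vertices joined by pairwise
internally disjoint paths whose interiors avoid all branch vertices. -/
def HasK5Subdivision {V : Type} (G : SimpleGraph V) : Prop :=
  ∃ b : Fin 5 → V, Function.Injective b ∧
    ∃ P : ∀ i j : Fin 5, G.Walk (b i) (b j),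
      (∀ i j : Fin 5, i < j → (P i j).IsPath) ∧
      (∀ i j : Fin 5, i < j → ∀ k : Fin 5, b k ∉ walkInterior (P i j)) ∧
      (∀ i j i' j' : Fin 5, i < j → i' < j' → (i, j) ≠ (i', j') →
        ∀ x ∈ walkInterior (P i j), x ∉ (P i' j').support)

/-- `G` contains a subdivision of `K3,3`. -/
def HasK33Subdivision {V : Type} (G : SimpleGraph V) : Prop :=
  ∃ a b : Fin 3 → V, Function.Injective a ∧ Function.Injective b ∧
    (∀ i j : Fin 3, a i ≠ b j) ∧
    ∃ P : ∀ i j : Fin 3, G.Walk (a i) (b j),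
      (∀ i j : Fin 3, (P i j).IsPath) ∧
      (∀ i j k : Fin 3, a k ∉ walkInterior (P i j) ∧ b k ∉ walkInterior (P i j)) ∧
      (∀ i j i' j' : Fin 3, (i, j) ≠ (i', j') →
        ∀ x ∈ walkInterior (P i j), x ∉ (P i' j').support)

/-- A finite graph is planar iff it contains no subdivision of `K5` or of `K3,3`
(Kuratowski's theorem). -/
def IsPlanar {V : Type} (G : SimpleGraph V) : Prop :=
  ¬ HasK5Subdivision G ∧ ¬ HasK33Subdivision G

/-- The graph obtained from `G` by adding a new apex vertex joined to all vertices of `S`. -/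
def apexGraph {V : Type} (G : SimpleGraph V) (S : Set V) : SimpleGraph (Option V) :=
  SimpleGraph.fromRel (fun x y =>
    (∃ a b : V, x = some a ∧ y = some b ∧ G.Adj a b) ∨
    (x = none ∧ ∃ a ∈ S, y = some a))

/-- `(G, S)` is planar: `G` can be drawn in a closed disc with no edge crossings and with
`S` on the boundary of the disc.  Equivalently, the graph obtained by adding an apex
vertex adjacent to all of `S` is planar. -/
def PairPlanar {V : Type} (G : SimpleGraph V) (S : Set V) : Prop :=
  IsPlanar (apexGraph G S)

/-- `(H, S)` is planar, for a subgraph `H` of an ambient graph. -/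
def SubgraphPairPlanar {V : Type} {G : SimpleGraph V} (H : G.Subgraph) (S : Set V) : Prop :=
  PairPlanar H.coe {x : H.verts | (x : V) ∈ S}

/-- A Hajós graph: no `K5`-subdivision, not 4-colorable, and vertex-minimum with these
two properties (every graph on fewer vertices has a `K5`-subdivision or is 4-colorable). -/
def IsHajos {V : Type} [Fintype V] (G : SimpleGraph V) : Prop :=
  ¬ HasK5Subdivision G ∧ ¬ G.Colorable 4 ∧
    ∀ n : ℕ, n < Fintype.card V → ∀ H : SimpleGraph (Fin n),
      HasK5Subdivision H ∨ H.Colorable 4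

/-- `(G1, G2)` is a `k`-separation of `G`: edge-disjoint subgraphs with union `G`,
`|V(G1) ∩ V(G2)| = k`, and each side carries an edge or a private vertex. -/
def IsSeparation {V : Type} {G : SimpleGraph V} (G1 G2 : G.Subgraph) (k : ℕ) : Prop :=
  G1 ⊔ G2 = ⊤ ∧ Disjoint G1.edgeSet G2.edgeSet ∧
  (G1.verts ∩ G2.verts).ncard = k ∧
  (G1.edgeSet.Nonempty ∨ (G1.verts \ G2.verts).Nonempty) ∧
  (G2.edgeSet.Nonempty ∨ (G2.verts \ G1.verts).Nonempty)

/-- `W` is a wheel with center `w`: it consists of a cycle `C` avoiding `w`, together with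
at least three edges (spokes) from `w` to `C`. -/
def IsWheelSubgraph {V : Type} {G : SimpleGraph V} (W : G.Subgraph) (w : V) : Prop :=
  ∃ (u : V) (C : G.Walk u u) (T : Set V), C.IsCycle ∧ w ∉ C.support ∧
    T ⊆ {x | x ∈ C.support} ∧ 3 ≤ T.ncard ∧
    W.verts = insert w {x | x ∈ C.support} ∧
    W.edgeSet = {e | e ∈ C.edges} ∪ (fun x => s(w, x)) '' T

/-- The subgraph `H` contains an `S`-good wheel: a wheel `W ≤ H` with center `w ∉ S` such
that every vertex of `S ∩ V(W)` is a neighbor of `w` in `H`. -/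
def HasGoodWheel {V : Type} {G : SimpleGraph V} (H : G.Subgraph) (S : Set V) : Prop :=
  ∃ (W : G.Subgraph) (w : V), W ≤ H ∧ IsWheelSubgraph W w ∧ w ∉ S ∧
    ∀ s ∈ S, s ∈ W.verts → H.Adj w s

/-- `G` is `k`-connected: more than `k` vertices, and deleting fewer than `k` vertices
leaves a connected graph. -/
def IsKConnected {V : Type} [Fintype V] (G : SimpleGraph V) (k : ℕ) : Prop :=
  k < Fintype.card V ∧ ∀ X : Set V, X.ncard < k → (G.induce (Xᶜ : Set V)).Connected

/- The six obstruction graphs, with `S = {t1,...,t5} = {0,1,2,3,4}` and the remaining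
vertices `u, v, w, z` labelled `5, 6, 7, 8`. -/

def Obs1 : SimpleGraph (Fin 6) :=
  SimpleGraph.fromEdgeSet {s(5,0), s(5,1), s(5,2), s(5,3)}

def Obs2 : SimpleGraph (Fin 6) :=
  SimpleGraph.fromEdgeSet {s(5,0), s(5,1), s(5,2), s(5,3), s(5,4)}

def Obs3 : SimpleGraph (Fin 7) :=
  SimpleGraph.fromEdgeSet {s(5,6), s(5,0), s(5,1), s(5,2), s(6,0), s(6,2), s(6,3), s(6,4)}

def Obs4 : SimpleGraph (Fin 7) :=
  SimpleGraph.fromEdgeSet {s(5,6), s(5,0), s(5,1), s(5,2), s(6,2), s(6,3), s(6,4)}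

def Obs5 : SimpleGraph (Fin 8) :=
  SimpleGraph.fromEdgeSet {s(5,6), s(5,0), s(5,1), s(5,2), s(6,7), s(6,0), s(6,2), s(6,3),
    s(7,0), s(7,3), s(7,4)}

def Obs6 : SimpleGraph (Fin 9) :=
  SimpleGraph.fromEdgeSet {s(8,5), s(8,6), s(8,7), s(8,0), s(8,1), s(8,4), s(5,6), s(5,1),
    s(5,2), s(6,7), s(6,2), s(6,3), s(7,3), s(7,4)}

/-- The subgraph `G1` (with distinguished set `S`) is isomorphic to the graph `O` on
`Fin n` by an isomorphism carrying `S` exactly onto `SO`. -/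
def IsoCarrying {V : Type} {G : SimpleGraph V} (G1 : G.Subgraph) (S : Set V)
    {n : ℕ} (O : SimpleGraph (Fin n)) (SO : Set (Fin n)) : Prop :=
  ∃ f : G1.coe ≃g O, ∀ x : G1.verts, ((x : V) ∈ S ↔ f x ∈ SO)

/-- `(G1, S)` is one of the six obstruction graphs of Figure 1. -/
def IsObstruction {V : Type} {G : SimpleGraph V} (G1 : G.Subgraph) (S : Set V) : Prop :=
  IsoCarrying G1 S Obs1 {0,1,2,3,4} ∨ IsoCarrying G1 S Obs2 {0,1,2,3,4} ∨
  IsoCarrying G1 S Obs3 {0,1,2,3,4} ∨ IsoCarrying G1 S Obs4 {0,1,2,3,4} ∨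
  IsoCarrying G1 S Obs5 {0,1,2,3,4} ∨ IsoCarrying G1 S Obs6 {0,1,2,3,4}

/-- `G − X + T`: delete the vertices of `X` (with all incident edges) and add the pairs
in `T` as edges. -/
def deleteAdd {V : Type} (G : SimpleGraph V) (X : Set V) (T : Set (V × V)) : SimpleGraph V :=
  SimpleGraph.fromRel (fun a b => (G.Adj a b ∧ a ∉ X ∧ b ∉ X) ∨ (a, b) ∈ T)

/-! ### Subdivisions of `K5` -/

lemma mem_support_interior {V : Type} {G : SimpleGraph V} {u v : V} (p : G.Walk u v) {x : V}
    (hx : x ∈ p.support) : x = u ∨ x = v ∨ x ∈ walkInterior p := by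
  cases p with
  | nil => simp at hx; exact Or.inl hx
  | cons h q =>
    rw [Walk.support_cons, List.mem_cons] at hx
    rcases hx with hx | hx
    · exact Or.inl hx
    · right
      have hne : q.support ≠ [] := by simp
      rw [← List.dropLast_append_getLast hne, List.mem_append] at hx
      rcases hx with hx | hx
      · right; simpa [walkInterior] using hx
      · left; simpa using hx

lemma interior_mem {V : Type} {G : SimpleGraph V} {u v : V} (p : G.Walk u v) (hp : p.IsPath)
    {x : V} (hx : x ∈ walkInterior p) : x ∈ p.support ∧ x ≠ u ∧ x ≠ v := by
  cases p with
  | nil => simp [walkInterior] at hx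
  | cons h q =>
    have hx' : x ∈ q.support.dropLast := by simpa [walkInterior] using hx
    have hxq : x ∈ q.support := List.mem_of_mem_dropLast hx'
    rw [Walk.cons_isPath_iff] at hp
    refine ⟨by simp [hxq], ?_, ?_⟩
    · rintro rfl; exact hp.2 hxq
    · rintro rfl
      have hnd := hp.1.support_nodup
      have hne : q.support ≠ [] := by simp
      rw [← List.dropLast_append_getLast hne, List.nodup_append] at hnd
      exact hnd.2.2 x hx' x (by simp) rfl

/-- A `K5`-subdivision from walks instead of paths: it suffices that the walk between `b i` and
`b j` stays in a set `T i j`, where the sets meet only in branch vertices. -/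
lemma hasK5_of {V : Type} {G : SimpleGraph V} (b : Fin 5 → V) (hb : Function.Injective b)
    (T : Fin 5 → Fin 5 → Set V)
    (hw : ∀ i j, i < j → ∃ p : G.Walk (b i) (b j), ∀ x ∈ p.support, x ∈ T i j)
    (hT : ∀ i j, i < j → ∀ k, b k ∈ T i j → k = i ∨ k = j)
    (hd : ∀ i j i' j', i < j → i' < j' → (i, j) ≠ (i', j') →
      ∀ x, x ∈ T i j → x ∈ T i' j' → ∃ k, x = b k) : HasK5Subdivision G := by
  classical
  have hw' : ∀ i j, ∃ p : G.Walk (b i) (b j), i < j → p.IsPath ∧ ∀ x ∈ p.support, x ∈ T i j := by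
    intro i j
    by_cases hij : i < j
    · obtain ⟨p, hp⟩ := hw i j hij
      exact ⟨p.bypass, fun _ => ⟨p.bypass_isPath,
        fun x hx => hp x (p.support_bypass_subset_support hx)⟩⟩
    · -- pairs with `j ≤ i` carry no condition, but a walk must still be supplied
      have hr : ∀ i j, G.Reachable (b i) (b j) := by
        intro i j
        rcases lt_trichotomy i j with h | h | h
        · exact ⟨(hw i j h).choose⟩
        · rw [h]
        · exact Reachable.symm ⟨(hw j i h).choose⟩
      obtain ⟨p⟩ := hr i j
      exact ⟨p, fun h => absurd h hij⟩
  choose P hP using hw'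
  refine ⟨b, hb, P, fun i j h => (hP i j h).1, ?_, ?_⟩
  · intro i j hij k hk
    obtain ⟨h1, h2, h3⟩ := interior_mem _ (hP i j hij).1 hk
    rcases hT i j hij k ((hP i j hij).2 _ h1) with rfl | rfl
    · exact h2 rfl
    · exact h3 rfl
  · intro i j i' j' hij hij' hne x hx hx'
    obtain ⟨h1, h2, h3⟩ := interior_mem _ (hP i j hij).1 hx
    have hxT := (hP i j hij).2 _ h1
    obtain ⟨k, rfl⟩ := hd i j i' j' hij hij' hne x hxT ((hP i' j' hij').2 _ hx')
    rcases hT i j hij k hxT with rfl | rfl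
    · exact h2 rfl
    · exact h3 rfl

/-- A `K5`-subdivision with paths for both orientations of every pair, and with disjointness
phrased through supports: a branch vertex lies only on the paths it ends, and a vertex on two
different paths is a branch vertex. -/
def NiceK5 {V : Type} (G : SimpleGraph V) (b : Fin 5 → V)
    (P : ∀ i j : Fin 5, G.Walk (b i) (b j)) : Prop :=
  Function.Injective b ∧ (∀ i j, i ≠ j → (P i j).IsPath) ∧
  (∀ i j, i ≠ j → ∀ k, b k ∈ (P i j).support → k = i ∨ k = j) ∧
  (∀ i j i' j', i ≠ j → i' ≠ j' → s(i, j) ≠ s(i', j') →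
      ∀ x, x ∈ (P i j).support → x ∈ (P i' j').support → ∃ k, x = b k) ∧
  (∀ i j, i ≠ j → P j i = (P i j).reverse)

lemma HasK5Subdivision.nice {V : Type} {G : SimpleGraph V} (h : HasK5Subdivision G) :
    ∃ b P, NiceK5 G b P := by
  obtain ⟨b, hb, P, h1, h2, h3⟩ := h
  let Q : ∀ i j : Fin 5, G.Walk (b i) (b j) :=
    fun i j => if i < j then P i j else (P j i).reverse
  -- every `Q i j` has the support of a `P i' j'` with `i' < j'`
  have hQ : ∀ i j, i ≠ j → ∃ i' j', i' < j' ∧ s(i, j) = s(i', j') ∧ (Q i j).IsPath ∧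
      ∀ x, x ∈ (Q i j).support ↔ x ∈ (P i' j').support := by
    intro i j hij
    rcases lt_or_gt_of_ne hij with h | h
    · exact ⟨i, j, h, rfl, by simp [Q, h, h1 i j h], by simp [Q, h]⟩
    · refine ⟨j, i, h, Sym2.eq_swap, ?_, ?_⟩
      · simp [Q, not_lt.2 h.le, h1 j i h]
      · simp [Q, not_lt.2 h.le]
  have hk : ∀ i j, i < j → ∀ k, b k ∈ (P i j).support → k = i ∨ k = j := by
    intro i j hij k hk
    rcases mem_support_interior _ hk with h | h | h
    · exact Or.inl (hb h)
    · exact Or.inr (hb h)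
    · exact absurd h (h2 i j hij k)
  refine ⟨b, Q, hb, fun i j hij => (hQ i j hij).choose_spec.choose_spec.2.2.1, ?_, ?_, ?_⟩
  rotate_right
  · intro i j hij
    rcases lt_or_gt_of_ne hij with h | h <;> simp [Q, h, not_lt.2 h.le]
  · intro i j hij k hbk
    obtain ⟨i', j', hlt, hs, -, hx⟩ := hQ i j hij
    have := hk i' j' hlt k ((hx _).1 hbk)
    have hmem : k ∈ s(i', j') := by simpa using this
    rw [← hs] at hmem
    simpa using hmem
  · intro i j i' j' hij hij' hne x hx hx'
    obtain ⟨i1, j1, hlt, hs, -, hxx⟩ := hQ i j hij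
    obtain ⟨i2, j2, hlt', hs', -, hxx'⟩ := hQ i' j' hij'
    rw [hxx] at hx
    rw [hxx'] at hx'
    rcases mem_support_interior _ hx with h | h | h
    · exact ⟨_, h⟩
    · exact ⟨_, h⟩
    · refine absurd hx' (h3 i1 j1 i2 j2 hlt hlt' ?_ x h)
      intro he
      apply hne
      rw [hs, hs']
      simp only [Prod.mk.injEq] at he
      rw [he.1, he.2]

/-- A `NiceK5` yields a `K5`-subdivision of `H` with branch vertices `f (b i)` when `H` has walks
between them inside the images of the paths. -/
lemma NiceK5.hasK5 {V W : Type} {G : SimpleGraph V} {H : SimpleGraph W} {b P}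
    (h : NiceK5 G b P) (f : V → W) (hf : Function.Injective f)
    (hw : ∀ i j, i ≠ j → ∃ p : H.Walk (f (b i)) (f (b j)),
      ∀ x ∈ p.support, ∃ y ∈ (P i j).support, f y = x) : HasK5Subdivision H := by
  obtain ⟨hb, -, h2, h3, -⟩ := h
  refine hasK5_of (f ∘ b) (hf.comp hb) (fun i j => {x | ∃ y ∈ (P i j).support, f y = x})
    (fun i j hij => hw i j hij.ne) ?_ ?_
  · rintro i j hij k ⟨y, hy, hyk⟩
    obtain rfl := hf hyk
    exact h2 i j hij.ne k hy
  · rintro i j i' j' hij hij' hne _ ⟨y, hy, rfl⟩ ⟨y', hy', hyy⟩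
    obtain rfl := hf hyy
    have hs : s(i, j) ≠ s(i', j') := by
      intro he
      rcases Sym2.eq_iff.1 he with ⟨rfl, rfl⟩ | ⟨rfl, rfl⟩
      · exact hne rfl
      · exact absurd hij hij'.not_gt
    obtain ⟨k, rfl⟩ := h3 i j i' j' hij.ne hij'.ne hs y' hy hy'
    exact ⟨k, rfl⟩

lemma HasK5Subdivision.map {V W : Type} {G : SimpleGraph V} {H : SimpleGraph W}
    (h : HasK5Subdivision G) (f : G →g H) (hf : Function.Injective f) : HasK5Subdivision H := by
  obtain ⟨b, P, hn⟩ := h.nice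
  refine hn.hasK5 f hf (fun i j _ => ⟨(P i j).map f, fun x hx => ?_⟩)
  simpa using hx

lemma HasK5Subdivision.mono {V : Type} {G H : SimpleGraph V}
    (h : HasK5Subdivision G) (hle : G ≤ H) : HasK5Subdivision H :=
  h.map (Hom.ofLE hle) (fun _ _ h => h)

lemma Walk.exists_adj_of_mem_support {V : Type} {G : SimpleGraph V} {u v : V} (p : G.Walk u v)
    (huv : u ≠ v) {x : V} (hx : x ∈ p.support) : ∃ y, G.Adj x y := by
  have key : ∀ u v (p : G.Walk u v), x ∈ p.support → x = v ∨ ∃ y, G.Adj x y := by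
    intro u v p
    induction p with
    | nil => intro hx; left; simpa using hx
    | cons h q ih =>
      intro hx
      rw [Walk.support_cons, List.mem_cons] at hx
      rcases hx with rfl | hx
      · exact Or.inr ⟨_, h⟩
      · exact ih hx
  rcases key u v p hx with rfl | h
  · rcases key x u p.reverse (by simp) with h | h
    · exact absurd h.symm huv
    · exact h
  · exact h

/-- Replacing an edge `st` by the path `s x t`, with `x` isolated in `H`, keeps a
`K5`-subdivision. -/
lemma K5_subdivide {V : Type} (H : SimpleGraph V) (s t x : V) (hx : ∀ y, ¬ H.Adj x y)
    (hxs : x ≠ s) (hxt : x ≠ t) (hst : s ≠ t) (h : HasK5Subdivision (H ⊔ edge s t)) :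
    HasK5Subdivision (H ⊔ edge s x ⊔ edge x t) := by
  obtain ⟨b, P, hn⟩ := h.nice
  have hiso : ∀ y, ¬ (H ⊔ edge s t).Adj x y := by
    intro y hy
    rw [sup_adj, edge_adj] at hy
    rcases hy with hy | ⟨⟨h, -⟩ | ⟨h, -⟩, -⟩
    · exact hx y hy
    · exact hxs h
    · exact hxt h
  have key : ∀ u v (p : (H ⊔ edge s t).Walk u v), ∃ q : (H ⊔ edge s x ⊔ edge x t).Walk u v,
      ∀ y ∈ q.support, y ∈ p.support ∨ (y = x ∧ s ∈ p.support ∧ t ∈ p.support) := by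
    intro u v p
    induction p with
    | nil => exact ⟨Walk.nil, by simp⟩
    | @cons u w v h p ih =>
      obtain ⟨q, hq⟩ := ih
      have h' := h
      rw [sup_adj, edge_adj] at h'
      have ax : ∀ a, a ≠ x → a = s ∨ a = t → (H ⊔ edge s x ⊔ edge x t).Adj a x := by
        rintro a ha (rfl | rfl) <;> simp [edge_adj, ha, ha.symm]
      have hcase : (H ⊔ edge s x ⊔ edge x t).Adj u w ∨
          ((u = s ∧ w = t) ∨ (u = t ∧ w = s)) := by
        rcases h' with h' | ⟨h', -⟩
        · left; simp [h']
        · right; exact h'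
      rcases hcase with hc | hc
      · refine ⟨Walk.cons hc q, ?_⟩
        intro y hy
        rw [Walk.support_cons, List.mem_cons] at hy
        rcases hy with rfl | hy
        · left; simp
        · rcases hq y hy with h1 | ⟨h1, h2, h3⟩
          · left; simp [h1]
          · right; simp [h1, h2, h3]
      · have hux : u ≠ x := by rcases hc with ⟨rfl, -⟩ | ⟨rfl, -⟩; exacts [hxs.symm, hxt.symm]
        have hwx : w ≠ x := by rcases hc with ⟨-, rfl⟩ | ⟨-, rfl⟩; exacts [hxt.symm, hxs.symm]
        refine ⟨Walk.cons (ax u hux (by tauto)) (Walk.cons (ax w hwx (by tauto)).symm q), ?_⟩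
        intro y hy
        have hst : s ∈ (Walk.cons h p).support ∧ t ∈ (Walk.cons h p).support := by
          rcases hc with ⟨rfl, rfl⟩ | ⟨rfl, rfl⟩ <;> simp
        simp only [Walk.support_cons, List.mem_cons] at hy
        rcases hy with rfl | rfl | hy
        · left; simp
        · right; exact ⟨rfl, hst⟩
        · rcases hq y hy with h1 | ⟨h1, h2, h3⟩
          · left; simp [h1]
          · right; exact ⟨h1, hst⟩
  obtain ⟨hb, -, h2, h3, -⟩ := hn
  have hxP : ∀ i j, i ≠ j → x ∉ (P i j).support := by
    intro i j hij hxx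
    obtain ⟨y, hy⟩ := Walk.exists_adj_of_mem_support (P i j) (hb.ne hij) hxx
    exact hiso y hy
  have hxb : ∀ k, b k ≠ x := by
    intro k hk
    obtain ⟨j, hj⟩ := exists_ne k
    exact hxP k j hj.symm (hk ▸ (P k j).start_mem_support)
  refine hasK5_of b hb (fun i j => {y | y ∈ (P i j).support ∨
      (y = x ∧ s ∈ (P i j).support ∧ t ∈ (P i j).support)}) (fun i j _ => key _ _ (P i j)) ?_ ?_
  · rintro i j hij k (hk | ⟨hk, -⟩)
    · exact h2 i j hij.ne k hk
    · exact absurd hk (hxb k)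
  · intro i j i' j' hij hij' hne y hy hy'
    have hs : s(i, j) ≠ s(i', j') := by
      intro he
      rcases Sym2.eq_iff.1 he with ⟨rfl, rfl⟩ | ⟨rfl, rfl⟩
      · exact hne rfl
      · exact absurd hij hij'.not_gt
    rcases hy with hy | ⟨rfl, hs1, ht1⟩
    · rcases hy' with hy' | ⟨rfl, -⟩
      · exact h3 i j i' j' hij.ne hij'.ne hs y hy hy'
      · exact absurd hy (hxP i j hij.ne)
    · rcases hy' with hy' | ⟨-, hs2, ht2⟩
      · exact absurd hy' (hxP _ _ hij'.ne)
      · -- two different paths cannot share both `s` and `t`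
        obtain ⟨k, rfl⟩ := h3 i j i' j' hij.ne hij'.ne hs _ hs1 hs2
        obtain ⟨l, rfl⟩ := h3 i j i' j' hij.ne hij'.ne hs _ ht1 ht2
        have hkl : k ≠ l := fun h => hst (by rw [h])
        exfalso
        apply hs
        have a1 := h2 i j hij.ne k hs1
        have a2 := h2 i j hij.ne l ht1
        have a3 := h2 i' j' hij'.ne k hs2
        have a4 := h2 i' j' hij'.ne l ht2
        have e1 : s(i, j) = s(k, l) := by
          rw [Sym2.eq_iff]; grind
        have e2 : s(i', j') = s(k, l) := by
          rw [Sym2.eq_iff]; grind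
        rw [e1, e2]

/-! ### Splitting a vertex -/

/-- An inner vertex of a path lies on only two of its edges. -/
lemma path_no_three {V : Type} {G : SimpleGraph V} {u v z p q r : V} (w : G.Walk u v)
    (hw : w.IsPath) (hzu : z ≠ u) (hzv : z ≠ v) (hpq : p ≠ q) (hpr : p ≠ r) (hqr : q ≠ r)
    (hp : s(z, p) ∈ w.edges) (hq : s(z, q) ∈ w.edges) (hr : s(z, r) ∈ w.edges) : False := by
  have hz : z ∈ w.support := Walk.fst_mem_support_of_mem_edges _ hp
  obtain ⟨i, rfl, hi⟩ := Walk.mem_support_iff_exists_getVert.1 hz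
  have hi0 : i ≠ 0 := by rintro rfl; simp at hzu
  have hil : i < w.length := by
    rcases hi.lt_or_eq with h | h
    · exact h
    · subst h; simp at hzv
  have h2 := hw.ncard_neighborSet_toSubgraph_internal_eq_two hi0 hil
  have hsub : ({p, q, r} : Set V) ⊆ w.toSubgraph.neighborSet (w.getVert i) := by
    rintro x (rfl | rfl | rfl) <;>
      simpa [Subgraph.mem_neighborSet, Walk.adj_toSubgraph_iff_mem_edges]
  have hfin : (w.toSubgraph.neighborSet (w.getVert i)).Finite :=
    Set.finite_of_ncard_ne_zero (by rw [h2]; norm_num)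
  have h3 := Set.ncard_le_ncard hsub hfin
  rw [h2, Set.ncard_eq_three.2 ⟨p, q, r, hpq, hpr, hqr, rfl⟩] at h3
  omega

/-- A nontrivial path starting at `z` is an edge `zp`, its only edge at `z`, followed by a walk
avoiding `z`. -/
lemma path_start {V : Type} {G : SimpleGraph V} {z v : V} (w : G.Walk z v)
    (hw : w.IsPath) (hzv : z ≠ v) : ∃ (p : V) (q : G.Walk p v), G.Adj z p ∧ z ∉ q.support ∧
      (∀ x ∈ q.support, x ∈ w.support) ∧ ∀ p', s(z, p') ∈ w.edges → p' = p := by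
  cases w with
  | nil => exact absurd rfl hzv
  | @cons _ p _ h q =>
    rw [Walk.cons_isPath_iff] at hw
    refine ⟨p, q, h, hw.2, fun x hx => by simp [hx], ?_⟩
    intro p' hp'
    rw [Walk.edges_cons, List.mem_cons] at hp'
    rcases hp' with hp' | hp'
    · rcases Sym2.eq_iff.1 hp' with ⟨-, h⟩ | ⟨h1, -⟩
      · exact h
      · exact absurd h1 h.ne
    · exact absurd (Walk.fst_mem_support_of_mem_edges _ hp') hw.2

lemma fin5_unique (i p q r j j' : Fin 5) (h1 : p ≠ i) (h2 : q ≠ i) (h3 : q ≠ p) (h4 : r ≠ i)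
    (h5 : r ≠ p) (h6 : r ≠ q) (h7 : j ≠ i) (h8 : j ≠ p) (h9 : j ≠ q) (h10 : j ≠ r)
    (k1 : j' ≠ i) (k2 : j' ≠ p) (k3 : j' ≠ q) (k4 : j' ≠ r) : j = j' := by
  by_contra hne
  have hcard : ({j', j, r, q, p, i} : Finset (Fin 5)).card = 6 := by
    simp [Finset.card_insert_of_notMem, *, Ne.symm hne]
  have := Finset.card_le_univ ({j', j, r, q, p, i} : Finset (Fin 5))
  simp [hcard] at this

set_option maxHeartbeats 1000000 in
/-- Splitting off three edges `zp`, `zq`, `zr` from `z`: a `K5`-subdivision survives when one of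
the three edges is dropped, or when they are moved to an isolated vertex `a` that is then joined
to `z`.  A branch
vertex has only four incident edges, so in the latter case `a` takes over as branch vertex and
`z` lies on the single remaining path. -/
lemma K5_split {V : Type} (H : SimpleGraph V) (z p q r a : V) (ha : ∀ y, ¬ H.Adj a y)
    (haz : a ≠ z) (hap : a ≠ p) (haq : a ≠ q) (har : a ≠ r)
    (hzp : z ≠ p) (hzq : z ≠ q) (hzr : z ≠ r) (hpq : p ≠ q) (hpr : p ≠ r) (hqr : q ≠ r)
    (h : HasK5Subdivision (H ⊔ edge z p ⊔ edge z q ⊔ edge z r)) :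
    HasK5Subdivision (H ⊔ edge z q ⊔ edge z r) ∨ HasK5Subdivision (H ⊔ edge z p ⊔ edge z r) ∨
    HasK5Subdivision (H ⊔ edge z p ⊔ edge z q) ∨
    HasK5Subdivision (H ⊔ edge a z ⊔ edge a p ⊔ edge a q ⊔ edge a r) := by
  obtain ⟨b, P, hn⟩ := h.nice
  -- an edge used by no path can be dropped
  have drop : ∀ (w : V) (H' : SimpleGraph V),
      (∀ x y, (H ⊔ edge z p ⊔ edge z q ⊔ edge z r).Adj x y → s(x, y) ≠ s(z, w) → H'.Adj x y) →
      (∀ i j, i ≠ j → s(z, w) ∉ (P i j).edges) → HasK5Subdivision H' := by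
    intro w H' hH' hw
    refine hn.hasK5 id (fun _ _ h => h) (fun i j hij => ?_)
    refine ⟨(P i j).transfer H' ?_, ?_⟩
    · intro e he
      induction e with
      | _ x y =>
        refine hH' x y ((P i j).adj_of_mem_edges he) ?_
        intro h; exact hw i j hij (h ▸ he)
    · simp
  by_cases hp : ∀ i j, i ≠ j → s(z, p) ∉ (P i j).edges
  · left
    refine drop p _ ?_ hp
    intro x y hxy hne
    simp only [sup_adj, edge_adj] at hxy ⊢
    grind
  by_cases hq : ∀ i j, i ≠ j → s(z, q) ∉ (P i j).edges
  · right; left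
    refine drop q _ ?_ hq
    intro x y hxy hne
    simp only [sup_adj, edge_adj] at hxy ⊢
    grind
  by_cases hr : ∀ i j, i ≠ j → s(z, r) ∉ (P i j).edges
  · right; right; left
    refine drop r _ ?_ hr
    intro x y hxy hne
    simp only [sup_adj, edge_adj] at hxy ⊢
    grind
  right; right; right
  push Not at hp hq hr
  obtain ⟨hb, h1, h2, h3, h4⟩ := hn
  have hzb : ∃ k, z = b k := by
    by_contra hzb
    obtain ⟨i, j, hij, hp⟩ := hp
    have same : ∀ w, (∃ i' j', i' ≠ j' ∧ s(z, w) ∈ (P i' j').edges) →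
        s(z, w) ∈ (P i j).edges := by
      rintro w ⟨i', j', hij', hw⟩
      by_contra hne
      apply hzb
      refine h3 i j i' j' hij hij' ?_ z (Walk.fst_mem_support_of_mem_edges _ hp)
        (Walk.fst_mem_support_of_mem_edges _ hw)
      intro he
      rcases Sym2.eq_iff.1 he with ⟨rfl, rfl⟩ | ⟨rfl, rfl⟩
      · exact hne hw
      · rw [h4 _ _ hij] at hw; simp at hw; exact hne hw
    exact path_no_three (P i j) (h1 i j hij) (fun h => hzb ⟨i, h⟩) (fun h => hzb ⟨j, h⟩)
      hpq hpr hqr hp (same q hq) (same r hr)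
  obtain ⟨i₀, rfl⟩ := hzb
  have haiso : ∀ y, ¬ (H ⊔ edge (b i₀) p ⊔ edge (b i₀) q ⊔ edge (b i₀) r).Adj a y := by
    intro y hy
    simp only [sup_adj, edge_adj] at hy
    have := ha y
    grind
  have haP : ∀ i j, i ≠ j → a ∉ (P i j).support := by
    intro i j hij hxx
    obtain ⟨y, hy⟩ := Walk.exists_adj_of_mem_support (P i j) (hb.ne hij) hxx
    exact haiso y hy
  have hab : ∀ k, b k ≠ a := by
    intro k hk
    obtain ⟨j, hj⟩ := exists_ne k
    exact haP k j hj.symm (hk ▸ (P k j).start_mem_support)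
  have hsymm : ∀ i j, i ≠ j → ∀ x, x ∈ (P j i).support ↔ x ∈ (P i j).support := by
    intro i j hij x
    rw [h4 i j hij]; simp
  -- a walk avoiding `b i₀` does not use the three moved edges
  have move : ∀ u v (w : (H ⊔ edge (b i₀) p ⊔ edge (b i₀) q ⊔ edge (b i₀) r).Walk u v),
      b i₀ ∉ w.support →
      ∃ w' : (H ⊔ edge a (b i₀) ⊔ edge a p ⊔ edge a q ⊔ edge a r).Walk u v,
        w'.support = w.support := by
    intro u v w hw
    suffices hsuff : ∀ e ∈ w.edges,
        e ∈ (H ⊔ edge a (b i₀) ⊔ edge a p ⊔ edge a q ⊔ edge a r).edgeSet from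
      ⟨w.transfer _ hsuff, w.support_transfer hsuff⟩
    intro e he
    induction e with
    | _ x y =>
      have hadj := w.adj_of_mem_edges he
      have hx : x ≠ b i₀ := fun h => hw (h ▸ Walk.fst_mem_support_of_mem_edges _ he)
      have hy : y ≠ b i₀ := fun h => hw (h ▸ Walk.snd_mem_support_of_mem_edges _ he)
      simp only [sup_adj, edge_adj, hx, hy, false_and, and_false, or_false] at hadj
      simp [hadj]
  have hfirst : ∀ j, ∃ f : V, j ≠ i₀ →
      (H ⊔ edge (b i₀) p ⊔ edge (b i₀) q ⊔ edge (b i₀) r).Adj (b i₀) f ∧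
      (∃ w : (H ⊔ edge a (b i₀) ⊔ edge a p ⊔ edge a q ⊔ edge a r).Walk f (b j),
        ∀ x ∈ w.support, x ∈ (P i₀ j).support ∧ x ≠ b i₀) ∧
      ∀ p', s(b i₀, p') ∈ (P i₀ j).edges → p' = f := by
    intro j
    by_cases hj : j = i₀
    · exact ⟨a, fun h => absurd hj h⟩
    · obtain ⟨f, w, hf, hzw, hw, hu⟩ :=
        path_start (P i₀ j) (h1 i₀ j (Ne.symm hj)) (hb.ne (Ne.symm hj))
      obtain ⟨w', hw'⟩ := move _ _ w hzw
      refine ⟨f, fun _ => ⟨hf, ⟨w', fun x hx => ?_⟩, hu⟩⟩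
      rw [hw'] at hx
      exact ⟨hw x hx, fun h => hzw (h ▸ hx)⟩
  choose f hf using hfirst
  have hused : ∀ w, (∃ i j, i ≠ j ∧ s(b i₀, w) ∈ (P i j).edges) → ∃ j, j ≠ i₀ ∧ f j = w := by
    rintro w ⟨i, j, hij, hw⟩
    rcases h2 i j hij i₀ (Walk.fst_mem_support_of_mem_edges _ hw) with rfl | rfl
    · exact ⟨j, hij.symm, ((hf j hij.symm).2.2 w hw).symm⟩
    · refine ⟨i, hij, ((hf i hij).2.2 w ?_).symm⟩
      rw [h4 i _ hij]; simpa using hw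
  obtain ⟨jp, hjp, rfl⟩ := hused p hp
  obtain ⟨jq, hjq, rfl⟩ := hused q hq
  obtain ⟨jr, hjr, rfl⟩ := hused r hr
  -- at most one of the four paths at `b i₀` starts with none of the three edges
  have huniq : ∀ j j', j ≠ i₀ → j' ≠ i₀ → f j ≠ f jp → f j ≠ f jq → f j ≠ f jr →
      f j' ≠ f jp → f j' ≠ f jq → f j' ≠ f jr → j = j' := by
    intro j j' hj hj' h1 h2 h3 h1' h2' h3'
    exact fin5_unique i₀ jp jq jr j j' hjp hjq (ne_of_apply_ne f hpq).symm hjr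
      (ne_of_apply_ne f hpr).symm (ne_of_apply_ne f hqr).symm hj (ne_of_apply_ne f h1)
      (ne_of_apply_ne f h2) (ne_of_apply_ne f h3) hj' (ne_of_apply_ne f h1')
      (ne_of_apply_ne f h2') (ne_of_apply_ne f h3')
  let new : Fin 5 → Prop := fun j => f j ≠ f jp ∧ f j ≠ f jq ∧ f j ≠ f jr
  let T : Fin 5 → Fin 5 → Set V := fun i j => {x | (x ∈ (P i j).support ∧ x ≠ b i₀) ∨
    (x = a ∧ (i = i₀ ∨ j = i₀)) ∨ (x = b i₀ ∧ ((i = i₀ ∧ new j) ∨ (j = i₀ ∧ new i)))}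
  have hT : ∀ i j, i ≠ j → ∀ x, x ∈ T i j → x ∈ T j i := by
    intro i j hij x hx
    simp only [T, Set.mem_ofPred_eq, hsymm i j hij] at hx ⊢
    tauto
  have hwalk : ∀ j, j ≠ i₀ →
      ∃ w : (H ⊔ edge a (b i₀) ⊔ edge a (f jp) ⊔ edge a (f jq) ⊔ edge a (f jr)).Walk a (b j),
        ∀ x ∈ w.support, x ∈ T i₀ j := by
    intro j hj
    obtain ⟨hadj, ⟨w, hw⟩, -⟩ := hf j hj
    by_cases hnew : new j
    · have hadj' : (H ⊔ edge a (b i₀) ⊔ edge a (f jp) ⊔ edge a (f jq) ⊔ edge a (f jr)).Adj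
          (b i₀) (f j) := by
        simp only [sup_adj, edge_adj] at hadj ⊢
        obtain ⟨n1, n2, n3⟩ := hnew
        left; left; left; left
        have := hadj
        grind
      have hadj2 : (H ⊔ edge a (b i₀) ⊔ edge a (f jp) ⊔ edge a (f jq) ⊔ edge a (f jr)).Adj
          a (b i₀) := by simp [edge_adj, haz]
      refine ⟨Walk.cons hadj2 (Walk.cons hadj' w), fun x hx => ?_⟩
      simp only [Walk.support_cons, List.mem_cons] at hx
      rcases hx with rfl | rfl | hx
      · exact Or.inr (Or.inl ⟨rfl, Or.inl rfl⟩)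
      · exact Or.inr (Or.inr ⟨rfl, Or.inl ⟨rfl, hnew⟩⟩)
      · exact Or.inl (hw x hx)
    · have hadj2 : (H ⊔ edge a (b i₀) ⊔ edge a (f jp) ⊔ edge a (f jq) ⊔ edge a (f jr)).Adj
          a (f j) := by
        simp only [sup_adj, edge_adj]
        simp only [new] at hnew
        grind
      refine ⟨Walk.cons hadj2 w, fun x hx => ?_⟩
      simp only [Walk.support_cons, List.mem_cons] at hx
      rcases hx with rfl | hx
      · exact Or.inr (Or.inl ⟨rfl, Or.inl rfl⟩)
      · exact Or.inl (hw x hx)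
  have hb' : ∀ k, k ≠ i₀ → Function.update b i₀ a k = b k := fun k hk => by simp [hk]
  have hb0 : Function.update b i₀ a i₀ = a := by simp
  refine hasK5_of (Function.update b i₀ a) ?_ T ?_ ?_ ?_
  · intro k l hkl
    by_cases hk : k = i₀ <;> by_cases hl : l = i₀
    · rw [hk, hl]
    · subst hk; rw [hb0, hb' l hl] at hkl; exact absurd hkl.symm (hab l)
    · subst hl; rw [hb0, hb' k hk] at hkl; exact absurd hkl (hab k)
    · rw [hb' k hk, hb' l hl] at hkl; exact hb hkl
  · intro i j hij
    by_cases hi : i = i₀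
    · subst hi
      rw [hb0, hb' j hij.ne']
      exact hwalk j hij.ne'
    · by_cases hj : j = i₀
      · subst hj
        rw [hb0, hb' i hi]
        obtain ⟨w, hw⟩ := hwalk i hi
        exact ⟨w.reverse, fun x hx => hT _ _ (Ne.symm hi) x (hw x (by simpa using hx))⟩
      · rw [hb' i hi, hb' j hj]
        have hz : b i₀ ∉ (P i j).support := by
          intro h
          rcases h2 i j hij.ne i₀ h with h | h
          · exact hi h.symm
          · exact hj h.symm
        obtain ⟨w, hw⟩ := move _ _ (P i j) hz
        refine ⟨w, fun x hx => Or.inl ?_⟩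
        rw [hw] at hx
        exact ⟨hx, fun h => hz (h ▸ hx)⟩
  · intro i j hij k hk
    by_cases hk0 : k = i₀
    · subst hk0
      rw [hb0] at hk
      rcases hk with ⟨h, -⟩ | ⟨-, h⟩ | ⟨h, -⟩
      · exact absurd h (haP i j hij.ne)
      · rcases h with h | h
        · exact Or.inl h.symm
        · exact Or.inr h.symm
      · exact absurd h haz
    · rw [hb' k hk0] at hk
      rcases hk with ⟨h, -⟩ | ⟨h, -⟩ | ⟨h, -⟩
      · exact h2 i j hij.ne k h
      · exact absurd h (hab k)
      · exact absurd (hb h) hk0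
  · intro i j i' j' hij hij' hne x hx hx'
    have hs : s(i, j) ≠ s(i', j') := by
      intro he
      rcases Sym2.eq_iff.1 he with ⟨rfl, rfl⟩ | ⟨rfl, rfl⟩
      · exact hne rfl
      · exact absurd hij hij'.not_gt
    by_cases hxa : x = a
    · exact ⟨i₀, by rw [hb0, hxa]⟩
    have e1 : ∀ i j, i < j → x ∈ T i j → (x ∈ (P i j).support ∧ x ≠ b i₀) ∨
        (x = b i₀ ∧ ∃ k, k ≠ i₀ ∧ s(i, j) = s(i₀, k) ∧ new k) := by
      rintro i j hij (h | ⟨h, -⟩ | ⟨h, ⟨rfl, h'⟩ | ⟨rfl, h'⟩⟩)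
      · exact Or.inl h
      · exact absurd h hxa
      · exact Or.inr ⟨h, j, hij.ne', rfl, h'⟩
      · exact Or.inr ⟨h, i, hij.ne, Sym2.eq_swap, h'⟩
    rcases e1 i j hij hx with ⟨m, hxz⟩ | ⟨hxz, k, hk, hsk, hnk⟩ <;>
    rcases e1 i' j' hij' hx' with ⟨m', hxz'⟩ | ⟨hxz', k', hk', hsk', hnk'⟩
    · obtain ⟨l, rfl⟩ := h3 i j i' j' hij.ne hij'.ne hs x m m'
      exact ⟨l, (hb' l (fun h => hxz (by rw [h]))).symm⟩
    · exact absurd hxz' hxz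
    · exact absurd hxz hxz'
    · exact absurd (by rw [hsk, hsk', huniq k k' hk hk' hnk.1 hnk.2.1 hnk.2.2 hnk'.1 hnk'.2.1
        hnk'.2.2]) hs

/-! ### Reductions of a Hajós graph -/

/-- `G` with all edges at vertices of `D` removed; the vertices of `D` stay, isolated. -/
def isolate {V : Type} (G : SimpleGraph V) (D : Set V) : SimpleGraph V where
  Adj u v := G.Adj u v ∧ u ∉ D ∧ v ∉ D
  symm := ⟨fun _ _ h => ⟨h.1.symm, h.2.2, h.2.1⟩⟩
  loopless := ⟨fun _ h => h.1.ne rfl⟩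

lemma isolate_le {V : Type} (G : SimpleGraph V) (D : Set V) : isolate G D ≤ G := fun _ _ h => h.1

lemma edge_le_of_adj {V : Type} {G : SimpleGraph V} {u v : V} (h : G.Adj u v) : edge u v ≤ G :=
  (edge_le_iff G).2 (Or.inr h)

/-- Minimality of a Hajós graph, applied to graphs on the same vertex set with an isolated
vertex. -/
lemma hajos_min {V : Type} [Fintype V] {G : SimpleGraph V} (hG : IsHajos G) (H : SimpleGraph V)
    (x : V) (hx : ∀ y, ¬ H.Adj x y) (hK : ¬ HasK5Subdivision H) :
    ∃ κ : V → Fin 4, ∀ u v, H.Adj u v → κ u ≠ κ v := by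
  classical
  have hcard : Fintype.card {y : V // y ≠ x} < Fintype.card V :=
    Fintype.card_subtype_lt (x := x) (by simp)
  let e := Fintype.equivFin {y : V // y ≠ x}
  let g : Fin (Fintype.card {y : V // y ≠ x}) → V := fun i => (e.symm i : V)
  have hg : Function.Injective g := Subtype.val_injective.comp e.symm.injective
  rcases hG.2.2 _ hcard (H.comap g) with h | ⟨⟨col⟩⟩
  · exact absurd (h.map (⟨g, fun h => h⟩ : H.comap g →g H) hg) hK
  · refine ⟨fun v => if h : v ≠ x then col (e ⟨v, h⟩) else 0, ?_⟩
    intro u v huv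
    have hu : u ≠ x := by rintro rfl; exact hx _ huv
    have hv : v ≠ x := by rintro rfl; exact hx _ huv.symm
    simp only [hu, hv, ne_eq, not_false_eq_true, dite_true]
    apply col.valid
    simpa [g] using huv

lemma hajos_not_col {V : Type} [Fintype V] {G : SimpleGraph V} (hG : IsHajos G) (κ : V → Fin 4)
    (h : ∀ u v, G.Adj u v → κ u ≠ κ v) : False :=
  hG.2.1 ⟨Coloring.mk κ (fun {u v} huv => h u v huv)⟩

lemma hajos_del {V : Type} [Fintype V] {G : SimpleGraph V} (hG : IsHajos G) (x : V) :
    ∃ κ : V → Fin 4, ∀ u v, G.Adj u v → u ≠ x → v ≠ x → κ u ≠ κ v := by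
  obtain ⟨κ, hκ⟩ := hajos_min hG (isolate G {x}) x (fun y h => h.2.1 rfl)
    (fun h => hG.1 (h.mono (isolate_le _ _)))
  exact ⟨κ, fun u v h hu hv => hκ u v ⟨h, hu, hv⟩⟩

/-- For a path `p b c q` of `G`, deleting `b` and `c` and adding the edge `pq` produces no
`K5`-subdivision, hence a 4-colourable graph. -/
lemma hajos_path {V : Type} [Fintype V] {G : SimpleGraph V} (hG : IsHajos G) {p b c q : V}
    (hpb : G.Adj p b) (hbc : G.Adj b c) (hcq : G.Adj c q) (hpc : p ≠ c) (hbq : b ≠ q)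
    (hpq : p ≠ q) :
    ∃ κ : V → Fin 4, (∀ u v, G.Adj u v → u ≠ b → u ≠ c → v ≠ b → v ≠ c → κ u ≠ κ v) ∧
      κ p ≠ κ q := by
  have hno : ∀ d, d = b ∨ d = c → ∀ y, ¬ (isolate G {b, c}).Adj d y := by
    rintro d (rfl | rfl) y h
    · exact h.2.1 (by simp)
    · exact h.2.1 (by simp)
  have hiso : ∀ y, ¬ (isolate G {b, c} ⊔ edge p q).Adj b y := by
    intro y hy
    rw [sup_adj, edge_adj] at hy
    have := hno b (Or.inl rfl) y
    have := hpb.ne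
    grind
  have hK : ¬ HasK5Subdivision (isolate G {b, c} ⊔ edge p q) := by
    intro h
    have h1 := K5_subdivide _ p q c (hno c (Or.inr rfl)) hpc.symm hcq.ne hpq h
    rw [sup_assoc, sup_comm (edge p c), ← sup_assoc] at h1
    refine hG.1 ((K5_subdivide _ p c b ?_ hpb.ne' hbc.ne hpc h1).mono ?_)
    · intro y hy
      rw [sup_adj, edge_adj] at hy
      have := hno b (Or.inl rfl) y
      have := hbc.ne
      grind
    · exact sup_le (sup_le (sup_le (isolate_le _ _) (edge_le_of_adj hcq)) (edge_le_of_adj hpb))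
        (edge_le_of_adj hbc)
  obtain ⟨κ, hκ⟩ := hajos_min hG (isolate G {b, c} ⊔ edge p q) b hiso hK
  refine ⟨κ, fun u v h h1 h2 h3 h4 => hκ u v (Or.inl ⟨h, by simp [h1, h2], by simp [h3, h4]⟩),
    hκ p q ?_⟩
  simp [edge_adj, hpq]

/-- For a triangle `a b c` with `a` adjacent to `p, q, r`, with `c` adjacent to `p, z` and `b`
adjacent to `q, z`: deleting the triangle and joining `z` to `p, q, r` produces no
`K5`-subdivision, hence a 4-colourable graph. -/
lemma hajos_star {V : Type} [Fintype V] {G : SimpleGraph V} (hG : IsHajos G) {a b c z p q r : V}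
    (hab : G.Adj a b) (hac : G.Adj a c) (hap : G.Adj a p) (haq : G.Adj a q)
    (har : G.Adj a r) (hcp : G.Adj c p) (hcz : G.Adj c z) (hbq : G.Adj b q) (hbz : G.Adj b z)
    (hbc : b ≠ c) (haz : a ≠ z) (hbp : b ≠ p) (hcq : c ≠ q) (hbr : b ≠ r) (hcr : c ≠ r)
    (hzp : z ≠ p) (hzq : z ≠ q) (hzr : z ≠ r) (hpq : p ≠ q) (hpr : p ≠ r) (hqr : q ≠ r) :
    ∃ κ : V → Fin 4, (∀ u v, G.Adj u v → u ≠ a → u ≠ b → u ≠ c → v ≠ a → v ≠ b → v ≠ c →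
      κ u ≠ κ v) ∧ κ z ≠ κ p ∧ κ z ≠ κ q ∧ κ z ≠ κ r := by
  set H := isolate G {a, b, c} with hH
  have hHG : H ≤ G := isolate_le _ _
  have hna : ∀ y, ¬ H.Adj a y := fun y h => h.2.1 (by simp)
  have hnb : ∀ y, ¬ H.Adj b y := fun y h => h.2.1 (by simp)
  have hnc : ∀ y, ¬ H.Adj c y := fun y h => h.2.1 (by simp)
  have n1 := hab.ne
  have n2 := hac.ne
  have n3 := hap.ne
  have n4 := haq.ne
  have n5 := har.ne
  have n6 := hcp.ne
  have n7 := hcz.ne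
  have n8 := hbq.ne
  have n9 := hbz.ne
  have eab := edge_le_of_adj hab
  have eac := edge_le_of_adj hac
  have eap := edge_le_of_adj hap
  have eaq := edge_le_of_adj haq
  have ear := edge_le_of_adj har
  have ecp := edge_le_of_adj hcp
  have ecz := edge_le_of_adj hcz
  have ebq := edge_le_of_adj hbq
  have ebz := edge_le_of_adj hbz
  have eca := edge_le_of_adj hac.symm
  have ezc := edge_le_of_adj hcz.symm
  have ezb := edge_le_of_adj hbz.symm
  have eba := edge_le_of_adj hab.symm
  have hiso : ∀ y, ¬ (H ⊔ edge z p ⊔ edge z q ⊔ edge z r).Adj a y := by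
    intro y hy
    have := hna y
    simp only [sup_adj, edge_adj] at hy
    grind
  have hK : ¬ HasK5Subdivision (H ⊔ edge z p ⊔ edge z q ⊔ edge z r) := by
    intro h
    apply hG.1
    rcases K5_split H z p q r a hna haz n3 n4 n5 hzp hzq hzr hpq hpr hqr h with h | h | h | h
    · -- `zq` becomes `z b q` and `zr` becomes `z c a r`
      have h1 := K5_subdivide _ z r a (by
        intro y hy; have := hna y; simp only [sup_adj, edge_adj] at hy; grind) haz n5 hzr h
      rw [sup_assoc, sup_comm (edge z a), ← sup_assoc] at h1
      have h2 := K5_subdivide _ z a c (by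
        intro y hy; have := hnc y; simp only [sup_adj, edge_adj] at hy; grind) n7 n2.symm
        haz.symm h1
      rw [show H ⊔ edge z q ⊔ edge a r ⊔ edge z c ⊔ edge c a =
        (H ⊔ edge a r ⊔ edge z c ⊔ edge c a) ⊔ edge z q by ac_rfl] at h2
      have h3 := K5_subdivide _ z q b (by
        intro y hy; have := hnb y; simp only [sup_adj, edge_adj] at hy; grind) n9 n8 hzq h2
      exact h3.mono (by simp only [sup_le_iff]; tauto)
    · -- `zp` becomes `z c p` and `zr` becomes `z b a r`
      have h1 := K5_subdivide _ z r a (by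
        intro y hy; have := hna y; simp only [sup_adj, edge_adj] at hy; grind) haz n5 hzr h
      rw [sup_assoc, sup_comm (edge z a), ← sup_assoc] at h1
      have h2 := K5_subdivide _ z a b (by
        intro y hy; have := hnb y; simp only [sup_adj, edge_adj] at hy; grind) n9 n1.symm
        haz.symm h1
      rw [show H ⊔ edge z p ⊔ edge a r ⊔ edge z b ⊔ edge b a =
        (H ⊔ edge a r ⊔ edge z b ⊔ edge b a) ⊔ edge z p by ac_rfl] at h2
      have h3 := K5_subdivide _ z p c (by
        intro y hy; have := hnc y; simp only [sup_adj, edge_adj] at hy; grind) n7 n6 hzp h2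
      exact h3.mono (by simp only [sup_le_iff]; tauto)
    · -- `zp` becomes `z c p` and `zq` becomes `z b q`
      have h1 := K5_subdivide _ z q b (by
        intro y hy; have := hnb y; simp only [sup_adj, edge_adj] at hy; grind) n9 n8 hzq h
      rw [show H ⊔ edge z p ⊔ edge z b ⊔ edge b q =
        (H ⊔ edge z b ⊔ edge b q) ⊔ edge z p by ac_rfl] at h1
      have h3 := K5_subdivide _ z p c (by
        intro y hy; have := hnc y; simp only [sup_adj, edge_adj] at hy; grind) n7 n6 hzp h1
      exact h3.mono (by simp only [sup_le_iff]; tauto)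
    · -- `az` becomes `a c z`
      rw [show H ⊔ edge a z ⊔ edge a p ⊔ edge a q ⊔ edge a r =
        (H ⊔ edge a p ⊔ edge a q ⊔ edge a r) ⊔ edge a z by ac_rfl] at h
      have h3 := K5_subdivide _ a z c (by
        intro y hy; have := hnc y; simp only [sup_adj, edge_adj] at hy; grind) n2.symm n7 haz h
      exact h3.mono (by simp only [sup_le_iff]; tauto)
  obtain ⟨κ, hκ⟩ := hajos_min hG (H ⊔ edge z p ⊔ edge z q ⊔ edge z r) a hiso hK
  refine ⟨κ, fun u v h h1 h2 h3 h4 h5 h6 => hκ u v (Or.inl (Or.inl (Or.inl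
    ⟨h, by simp [h1, h2, h3], by simp [h4, h5, h6]⟩))), ?_, ?_, ?_⟩ <;> apply hκ <;>
    simp [edge_adj, hzp, hzq, hzr]

/-- For paths `z a p` and `z b c q` of `G` meeting only in `z`: deleting `a`, `b`, `c` and joining
`z` to `p` and `q` produces no `K5`-subdivision, hence a 4-colourable graph. -/
lemma hajos_two_paths {V : Type} [Fintype V] {G : SimpleGraph V} (hG : IsHajos G)
    {a b c z p q : V} (hza : G.Adj z a) (hap : G.Adj a p) (hzb : G.Adj z b) (hbc : G.Adj b c)
    (hcq : G.Adj c q) (hab : a ≠ b) (hac : a ≠ c) (haq : a ≠ q) (hbp : b ≠ p) (hbq : b ≠ q)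
    (hcz : c ≠ z) (hcp : c ≠ p) (hzp : z ≠ p) (hzq : z ≠ q) :
    ∃ κ : V → Fin 4, (∀ u v, G.Adj u v → u ≠ a → u ≠ b → u ≠ c → v ≠ a → v ≠ b → v ≠ c →
      κ u ≠ κ v) ∧ κ z ≠ κ p ∧ κ z ≠ κ q := by
  set H := isolate G {a, b, c} with hH
  have hHG : H ≤ G := isolate_le _ _
  have hna : ∀ y, ¬ H.Adj a y := fun y h => h.2.1 (by simp)
  have hnb : ∀ y, ¬ H.Adj b y := fun y h => h.2.1 (by simp)
  have hnc : ∀ y, ¬ H.Adj c y := fun y h => h.2.1 (by simp)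
  have n1 := hza.ne
  have n2 := hap.ne
  have n3 := hzb.ne
  have n4 := hbc.ne
  have n5 := hcq.ne
  have hiso : ∀ y, ¬ (H ⊔ edge z p ⊔ edge z q).Adj a y := by
    intro y hy
    have := hna y
    simp only [sup_adj, edge_adj] at hy
    grind
  have hK : ¬ HasK5Subdivision (H ⊔ edge z p ⊔ edge z q) := by
    intro h
    have h1 := K5_subdivide _ z q c (by
      intro y hy; have := hnc y; simp only [sup_adj, edge_adj] at hy; grind) hcz n5 hzq h
    rw [sup_assoc, sup_comm (edge z c), ← sup_assoc] at h1
    have h2 := K5_subdivide _ z c b (by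
      intro y hy; have := hnb y; simp only [sup_adj, edge_adj] at hy; grind) n3.symm n4 hcz.symm h1
    rw [show H ⊔ edge z p ⊔ edge c q ⊔ edge z b ⊔ edge b c =
      (H ⊔ edge c q ⊔ edge z b ⊔ edge b c) ⊔ edge z p by ac_rfl] at h2
    have h3 := K5_subdivide _ z p a (by
      intro y hy; have := hna y; simp only [sup_adj, edge_adj] at hy; grind) n1.symm n2 hzp h2
    have e1 := edge_le_of_adj hza
    have e2 := edge_le_of_adj hap
    have e3 := edge_le_of_adj hzb
    have e4 := edge_le_of_adj hbc
    have e5 := edge_le_of_adj hcq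
    exact hG.1 (h3.mono (by simp only [sup_le_iff]; tauto))
  obtain ⟨κ, hκ⟩ := hajos_min hG (H ⊔ edge z p ⊔ edge z q) a hiso hK
  refine ⟨κ, fun u v h h1 h2 h3 h4 h5 h6 => hκ u v (Or.inl (Or.inl
    ⟨h, by simp [h1, h2, h3], by simp [h4, h5, h6]⟩)), ?_, ?_⟩ <;> apply hκ <;>
    simp [edge_adj, hzp, hzq]

/-! ### Consequences of planarity -/

/-- The `K3,3` counterpart of `hasK5_of`. -/
lemma hasK33_of {V : Type} {G : SimpleGraph V} (a b : Fin 3 → V) (ha : Function.Injective a)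
    (hb : Function.Injective b) (hab : ∀ i j, a i ≠ b j) (T : Fin 3 → Fin 3 → Set V)
    (hw : ∀ i j, ∃ p : G.Walk (a i) (b j), ∀ x ∈ p.support, x ∈ T i j)
    (hT : ∀ i j k, (a k ∈ T i j → k = i) ∧ (b k ∈ T i j → k = j))
    (hd : ∀ i j i' j', (i, j) ≠ (i', j') →
      ∀ x, x ∈ T i j → x ∈ T i' j' → ∃ k, x = a k ∨ x = b k) : HasK33Subdivision G := by
  classical
  have hw' : ∀ i j, ∃ p : G.Walk (a i) (b j), p.IsPath ∧ ∀ x ∈ p.support, x ∈ T i j := by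
    intro i j
    obtain ⟨p, hp⟩ := hw i j
    exact ⟨p.bypass, p.bypass_isPath, fun x hx => hp x (p.support_bypass_subset_support hx)⟩
  choose P hP using hw'
  have hbr : ∀ i j k, a k ∉ walkInterior (P i j) ∧ b k ∉ walkInterior (P i j) := by
    refine fun i j k => ⟨fun hk => ?_, fun hk => ?_⟩
    · obtain ⟨h1, h2, h3⟩ := interior_mem _ (hP i j).1 hk
      exact h2 (by rw [(hT i j k).1 ((hP i j).2 _ h1)])
    · obtain ⟨h1, h2, h3⟩ := interior_mem _ (hP i j).1 hk
      exact h3 (by rw [(hT i j k).2 ((hP i j).2 _ h1)])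
  refine ⟨a, b, ha, hb, hab, P, fun i j => (hP i j).1, hbr, ?_⟩
  intro i j i' j' hne x hx hx'
  have h1 := interior_mem _ (hP i j).1 hx
  obtain ⟨k, rfl | rfl⟩ := hd i j i' j' hne x ((hP i j).2 _ h1.1) ((hP i' j').2 _ hx')
  · exact (hbr i j k).1 hx
  · exact (hbr i j k).2 hx

/-- `u` and `v` are joined by an edge (`m = none`) or by a path of length two through the vertex
carried by `m`. -/
def Link {V : Type} (G : SimpleGraph V) (u v : V) : Option V → Prop
  | none => G.Adj u v
  | some x => G.Adj u x ∧ G.Adj x v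

lemma Link.walk {V : Type} {G : SimpleGraph V} {u v : V} {m : Option V} (h : Link G u v m) :
    ∃ p : G.Walk u v, ∀ x ∈ p.support, x = u ∨ x = v ∨ m = some x := by
  cases m with
  | none =>
    have h' : G.Adj u v := h
    exact ⟨Walk.cons h' .nil, by simp⟩
  | some y =>
    obtain ⟨h1, h2⟩ : G.Adj u y ∧ G.Adj y v := h
    exact ⟨Walk.cons h1 (Walk.cons h2 .nil), by simp⟩

/-- A subdivision of `K3,3` in which every edge is subdivided at most once. -/
lemma hasK33_of_link {V : Type} {G : SimpleGraph V} (a b : Fin 3 → V) (ha : Function.Injective a)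
    (hb : Function.Injective b) (hab : ∀ i j, a i ≠ b j) (m : Fin 3 → Fin 3 → Option V)
    (hm : ∀ i j, Link G (a i) (b j) (m i j))
    (hbr : ∀ i j k, m i j ≠ some (a k) ∧ m i j ≠ some (b k))
    (hinj : ∀ i j i' j' x, m i j = some x → m i' j' = some x → (i, j) = (i', j')) :
    HasK33Subdivision G := by
  refine hasK33_of a b ha hb hab (fun i j => {x | x = a i ∨ x = b j ∨ m i j = some x})
    (fun i j => (hm i j).walk) ?_ ?_
  · intro i j k
    constructor
    · rintro (h | h | h)
      · exact ha h
      · exact absurd h (hab _ _)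
      · exact absurd h (hbr i j k).1
    · rintro (h | h | h)
      · exact absurd h.symm (hab _ _)
      · exact hb h
      · exact absurd h (hbr i j k).2
  · rintro i j i' j' hne x (h | h | h) hx
    · exact ⟨i, Or.inl h⟩
    · exact ⟨j, Or.inr h⟩
    · rcases hx with hx | hx | hx
      · exact ⟨i', Or.inl hx⟩
      · exact ⟨j', Or.inr hx⟩
      · exact absurd (hinj _ _ _ _ _ h hx) hne

/-- A subdivision of `K5` in which every edge is subdivided at most once. -/
lemma hasK5_of_link {V : Type} {G : SimpleGraph V} (b : Fin 5 → V)
    (hb : Function.Injective b) (m : Fin 5 → Fin 5 → Option V)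
    (hm : ∀ i j, i < j → Link G (b i) (b j) (m i j))
    (hbr : ∀ i j k, m i j ≠ some (b k))
    (hinj : ∀ i j i' j' x, m i j = some x → m i' j' = some x → (i, j) = (i', j')) :
    HasK5Subdivision G := by
  refine hasK5_of b hb (fun i j => {x | x = b i ∨ x = b j ∨ m i j = some x})
    (fun i j h => (hm i j h).walk) ?_ ?_
  · rintro i j - k (h | h | h)
    · exact Or.inl (hb h)
    · exact Or.inr (hb h)
    · exact absurd h (hbr i j k)
  · rintro i j i' j' - - hne x (h | h | h) h'
    · exact ⟨i, h⟩
    · exact ⟨j, h⟩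
    · rcases h' with h' | h' | h'
      · exact ⟨i', h'⟩
      · exact ⟨j', h'⟩
      · exact absurd (hinj _ _ _ _ _ h h') hne

lemma apex_some_some {W : Type} (Γ : SimpleGraph W) (S : Set W) (a b : W) :
    (apexGraph Γ S).Adj (some a) (some b) ↔ Γ.Adj a b := by
  simp only [apexGraph, fromRel_adj]
  constructor
  · rintro ⟨-, (⟨x, y, hx, hy, h⟩ | ⟨h, -⟩) | (⟨x, y, hx, hy, h⟩ | ⟨h, -⟩)⟩
    · cases hx; cases hy; exact h
    · cases h
    · cases hx; cases hy; exact h.symm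
    · cases h
  · intro h
    exact ⟨by simpa using h.ne, Or.inl (Or.inl ⟨a, b, rfl, rfl, h⟩)⟩

lemma apex_none_some {W : Type} (Γ : SimpleGraph W) (S : Set W) {a : W} (ha : a ∈ S) :
    (apexGraph Γ S).Adj none (some a) := by
  simp only [apexGraph, fromRel_adj]
  exact ⟨by simp, Or.inl (Or.inr ⟨by trivial, a, ha, rfl⟩)⟩

lemma inj3 {V : Type} {a b c : V} (h1 : a ≠ b) (h2 : a ≠ c) (h3 : b ≠ c) :
    Function.Injective ![a, b, c] := by
  intro i j h
  fin_cases i <;> fin_cases j <;> simp_all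

lemma inj5 {V : Type} {a b c d e : V} (h1 : a ≠ b) (h2 : a ≠ c) (h3 : b ≠ c)
    (h4 : d ≠ a) (h5 : d ≠ b) (h6 : d ≠ c) (h7 : e ≠ a) (h8 : e ≠ b) (h9 : e ≠ c) (h0 : d ≠ e) :
    Function.Injective ![a, b, c, d, e] := by
  intro i j h
  fin_cases i <;> fin_cases j <;> simp_all

/-- Two vertices share at most two boundary neighbours: three of them would form a `K3,3` with the
two vertices and the apex. -/
lemma planar_share {W : Type} {Γ : SimpleGraph W} {S : Set W} (hP : PairPlanar Γ S) {u v s t r : W}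
    (huv : u ≠ v) (hs : s ∈ S) (ht : t ∈ S) (hr : r ∈ S)
    (hst : s ≠ t) (hsr : s ≠ r) (htr : t ≠ r) (us : Γ.Adj u s) (ut : Γ.Adj u t) (ur : Γ.Adj u r)
    (vs : Γ.Adj v s) (vt : Γ.Adj v t) (vr : Γ.Adj v r) : False := by
  have as := apex_none_some Γ S hs
  have at' := apex_none_some Γ S ht
  have ar := apex_none_some Γ S hr
  have n1 := us.ne
  have n2 := ut.ne
  have n3 := ur.ne
  have n4 := vs.ne
  have n5 := vt.ne
  have n6 := vr.ne
  refine hP.2 (hasK33_of_link ![some u, some v, none] ![some s, some t, some r]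
    (inj3 (by simpa) (by simp) (by simp)) (inj3 (by simpa) (by simpa) (by simpa)) ?_
    (fun _ _ => none) ?_ (by simp) (by simp))
  · simp [Fin.forall_fin_succ, *]
  · simp [Fin.forall_fin_succ, Link, apex_some_some, *]

/-- If `u` and `v`, off the boundary, share boundary vertices `s` and `t`, there is no third vertex
`w` off the boundary that is adjacent to `u`, reachable from `v` by an edge or through another
boundary vertex, and adjacent to a further boundary vertex `r`: this would give a subdivided
`K3,3` with parts `u, v, apex` and `s, t, w`. -/
lemma planar_share_third {W : Type} {Γ : SimpleGraph W} {S : Set W} (hP : PairPlanar Γ S)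
    {u v w s t r : W} (m : Option W)
    (huv : u ≠ v) (hvw : v ≠ w) (huS : u ∉ S) (hvS : v ∉ S) (hwS : w ∉ S)
    (hs : s ∈ S) (ht : t ∈ S) (hr : r ∈ S)
    (hst : s ≠ t) (hsr : r ≠ s) (htr : r ≠ t) (us : Γ.Adj u s) (ut : Γ.Adj u t)
    (vs : Γ.Adj v s) (vt : Γ.Adj v t) (uw : Γ.Adj u w) (vw : Link Γ v w m)
    (hm : ∀ x, m = some x → x ∈ S ∧ x ≠ s ∧ x ≠ t ∧ x ≠ r) (wr : Γ.Adj w r) : False := by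
  have as := apex_none_some Γ S hs
  have at' := apex_none_some Γ S ht
  have ar := apex_none_some Γ S hr
  have rw' := wr.symm
  have n0 := uw.ne
  have n1 := us.ne
  have n2 := ut.ne
  have n4 := vs.ne
  have n5 := vt.ne
  have n6 := wr.ne
  have n7 : w ≠ s := by rintro rfl; exact hwS hs
  have n8 : w ≠ t := by rintro rfl; exact hwS ht
  have n9 : r ≠ u := by rintro rfl; exact huS hr
  have n10 : r ≠ v := by rintro rfl; exact hvS hr
  cases m with
  | none =>
    have vw' : Γ.Adj v w := vw
    refine hP.2 (hasK33_of_link ![some u, some v, none] ![some s, some t, some w]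
      (inj3 (by simpa) (by simp) (by simp))
      (inj3 (by simpa) (by simpa using n7.symm) (by simpa using n8.symm)) ?_
      ![![none, none, none], ![none, none, none], ![none, none, some (some r)]] ?_ ?_ ?_)
    · simp [Fin.forall_fin_succ, *]
    · simp [Fin.forall_fin_succ, Link, apex_some_some, *]
    · simp [Fin.forall_fin_succ, *, n6.symm]
    · simp [Fin.forall_fin_succ]
  | some x =>
    obtain ⟨hxS, h1, h2, h3⟩ := hm x rfl
    obtain ⟨vx, xw⟩ : Γ.Adj v x ∧ Γ.Adj x w := vw
    have n11 : x ≠ u := by rintro rfl; exact huS hxS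
    have n12 : x ≠ v := by rintro rfl; exact hvS hxS
    have n13 : x ≠ w := by rintro rfl; exact hwS hxS
    refine hP.2 (hasK33_of_link ![some u, some v, none] ![some s, some t, some w]
      (inj3 (by simpa) (by simp) (by simp))
      (inj3 (by simpa) (by simpa using n7.symm) (by simpa using n8.symm)) ?_
      ![![none, none, none], ![none, none, some (some x)], ![none, none, some (some r)]] ?_ ?_ ?_)
    · simp [Fin.forall_fin_succ, *]
    · simp [Fin.forall_fin_succ, Link, apex_some_some, *]
    · simp [Fin.forall_fin_succ, *, n6.symm]
    · simp [Fin.forall_fin_succ, h3, h3.symm]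

/-- A triangle has at most one common boundary neighbour: two of them, joined
through the apex, would complete it to a subdivided `K5`. -/
lemma planar_triangle_two {W : Type} {Γ : SimpleGraph W} {S : Set W} (hP : PairPlanar Γ S)
    {a b c s t : W} (ab : Γ.Adj a b) (ac : Γ.Adj a c) (bc : Γ.Adj b c)
    (hs : s ∈ S) (ht : t ∈ S) (hst : s ≠ t) (as : Γ.Adj a s) (bs : Γ.Adj b s) (cs : Γ.Adj c s)
    (at' : Γ.Adj a t) (bt : Γ.Adj b t) (ct : Γ.Adj c t) : False := by
  have es := (apex_none_some Γ S hs).symm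
  have et := apex_none_some Γ S ht
  refine hP.1 (hasK5_of_link ![some a, some b, some c, some s, some t]
    (inj5 (by simpa using ab.ne) (by simpa using ac.ne) (by simpa using bc.ne)
      (by simpa using as.ne') (by simpa using bs.ne') (by simpa using cs.ne')
      (by simpa using at'.ne') (by simpa using bt.ne') (by simpa using ct.ne') (by simpa))
    (fun i j => if i = 3 ∧ j = 4 then some none else none) ?_ ?_ ?_)
  · simp [Fin.forall_fin_succ, Link, apex_some_some, *]
  · intro i j k
    fin_cases k <;> (split_ifs; all_goals simp)
  · intro i j i' j' x h h'
    split_ifs at h h' <;> simp_all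

/-- A triangle off the boundary with a common boundary neighbour `s` cannot have three further
distinct boundary neighbours, one for each corner: the triangle, `s` and the apex would form a
subdivided `K5`. -/
lemma planar_triangle_one {W : Type} {Γ : SimpleGraph W} {S : Set W} (hP : PairPlanar Γ S)
    {a b c s a' b' c' : W} (ab : Γ.Adj a b) (ac : Γ.Adj a c) (bc : Γ.Adj b c)
    (haS : a ∉ S) (hbS : b ∉ S) (hcS : c ∉ S)
    (hs : s ∈ S) (as : Γ.Adj a s) (bs : Γ.Adj b s) (cs : Γ.Adj c s)
    (ha : a' ∈ S) (hb : b' ∈ S) (hc : c' ∈ S) (h1 : a' ≠ s) (h2 : b' ≠ s) (h3 : c' ≠ s)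
    (h4 : a' ≠ b') (h5 : a' ≠ c') (h6 : b' ≠ c')
    (aa : Γ.Adj a a') (bb : Γ.Adj b b') (cc : Γ.Adj c c') : False := by
  have es := (apex_none_some Γ S hs).symm
  have ea := (apex_none_some Γ S ha).symm
  have eb := (apex_none_some Γ S hb).symm
  have ec := (apex_none_some Γ S hc).symm
  have key : ∀ {x y}, x ∈ S → y ∉ S → x ≠ y := by rintro x y h h' rfl; exact h' h
  have k1 := key ha haS
  have k2 := key ha hbS
  have k3 := key ha hcS
  have k4 := key hb haS
  have k5 := key hb hbS
  have k6 := key hb hcS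
  have k7 := key hc haS
  have k8 := key hc hbS
  have k9 := key hc hcS
  refine hP.1 (hasK5_of_link ![some a, some b, some c, some s, none]
    (inj5 (by simpa using ab.ne) (by simpa using ac.ne) (by simpa using bc.ne)
      (by simpa using as.ne') (by simpa using bs.ne') (by simpa using cs.ne')
      (by simp) (by simp) (by simp) (by simp))
    (fun i j => if j = 4 then ![some (some a'), some (some b'), some (some c'), none, none] i
      else none) ?_ ?_ ?_)
  · simp [Fin.forall_fin_succ, Link, apex_some_some, *]
  · intro i j k
    split_ifs
    · fin_cases i <;> fin_cases k <;> simp [*]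
    · simp
  · intro i j i' j' x h h'
    split_ifs at h h'
    rw [← h'] at h
    fin_cases i <;> fin_cases i' <;> simp_all [eq_comm]

/-! ### Configurations -/

/-- The situation of the theorem, away from the language of subgraphs: in a Hajós graph, a set `A`
of three vertices whose neighbours all lie in `A ∪ S`, where `|S| = 5`, together with the
consequences of planarity from `planar_share`, `planar_share_third`, `planar_triangle_two` and
`planar_triangle_one`. -/
structure Cfg {V : Type} [Fintype V] (G : SimpleGraph V) (S A : Finset V) : Prop where
  hajos : IsHajos G
  cardS : S.card = 5
  cardA : A.card = 3
  disj : ∀ x ∈ A, x ∉ S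
  closed : ∀ u ∈ A, ∀ x, G.Adj u x → x ∈ A ∨ x ∈ S
  share : ∀ u ∈ A, ∀ v ∈ A, u ≠ v → ∀ s ∈ S, ∀ t ∈ S, ∀ r ∈ S, s ≠ t → s ≠ r → t ≠ r →
    G.Adj u s → G.Adj u t → G.Adj u r → G.Adj v s → G.Adj v t → G.Adj v r → False
  third : ∀ u ∈ A, ∀ v ∈ A, ∀ w ∈ A, u ≠ v → ∀ s ∈ S, ∀ t ∈ S, ∀ r ∈ S,
    s ≠ t → r ≠ s → r ≠ t → G.Adj u s → G.Adj u t → G.Adj v s → G.Adj v t →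
    G.Adj u w → G.Adj v w → G.Adj w r → False
  third_via : ∀ u ∈ A, ∀ v ∈ A, ∀ w ∈ A, u ≠ v → v ≠ w →
    ∀ s ∈ S, ∀ t ∈ S, ∀ r ∈ S, ∀ m ∈ S,
    s ≠ t → r ≠ s → r ≠ t → m ≠ s → m ≠ t → m ≠ r →
    G.Adj u s → G.Adj u t → G.Adj v s → G.Adj v t →
    G.Adj u w → G.Adj v m → G.Adj w m → G.Adj w r → False
  tri_two : ∀ a ∈ A, ∀ b ∈ A, ∀ c ∈ A, G.Adj a b → G.Adj a c → G.Adj b c →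
    ∀ s ∈ S, ∀ t ∈ S, s ≠ t → G.Adj a s → G.Adj b s → G.Adj c s →
    G.Adj a t → G.Adj b t → G.Adj c t → False
  tri_one : ∀ a ∈ A, ∀ b ∈ A, ∀ c ∈ A, G.Adj a b → G.Adj a c → G.Adj b c →
    ∀ s ∈ S, G.Adj a s → G.Adj b s → G.Adj c s →
    ∀ a' ∈ S, ∀ b' ∈ S, ∀ c' ∈ S, a' ≠ s → b' ≠ s → c' ≠ s → a' ≠ b' → a' ≠ c' → b' ≠ c' →
    G.Adj a a' → G.Adj b b' → G.Adj c c' → False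

/-- The three named vertices exhaust `A`. -/
structure Enum {V : Type} (A : Finset V) (a b c : V) : Prop where
  ha : a ∈ A
  hb : b ∈ A
  hc : c ∈ A
  ab : a ≠ b
  ac : a ≠ c
  bc : b ≠ c
  all : ∀ x ∈ A, x = a ∨ x = b ∨ x = c

lemma Enum.rot {V : Type} {A : Finset V} {a b c : V} (h : Enum A a b c) : Enum A b c a :=
  ⟨h.hb, h.hc, h.ha, h.bc, h.ab.symm, h.ac.symm, fun x hx => by have := h.all x hx; tauto⟩

lemma Enum.swap {V : Type} {A : Finset V} {a b c : V} (h : Enum A a b c) : Enum A c b a :=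
  ⟨h.hc, h.hb, h.ha, h.bc.symm, h.ac.symm, h.ab.symm,
    fun x hx => by have := h.all x hx; tauto⟩

open Classical in
/-- The neighbours of `u` in `S`. -/
noncomputable def nbr {V : Type} (G : SimpleGraph V) (S : Finset V) (u : V) : Finset V :=
  S.filter (G.Adj u)

lemma mem_nbr {V : Type} {G : SimpleGraph V} {S : Finset V} {u x : V} :
    x ∈ nbr G S u ↔ x ∈ S ∧ G.Adj u x := by simp [nbr]

lemma nbr_subset {V : Type} {G : SimpleGraph V} {S : Finset V} (u : V) : nbr G S u ⊆ S :=
  fun _ hx => (mem_nbr.1 hx).1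

/-- Every vertex of a Hajós graph has degree at least four. -/
lemma hajos_degree {V : Type} [Fintype V] {G : SimpleGraph V} (hG : IsHajos G) (u : V)
    (F : Finset V) (hF : F.card ≤ 3) : ∃ x, G.Adj u x ∧ x ∉ F := by
  classical
  by_contra! hcon
  obtain ⟨κ, hκ⟩ := hajos_del hG u
  obtain ⟨c, hc⟩ : ∃ c : Fin 4, c ∉ F.image κ := by
    by_contra! h
    have h1 : (Finset.univ : Finset (Fin 4)) ⊆ F.image κ := fun x _ => h x
    have h2 := Finset.card_le_card h1
    have h3 := Finset.card_image_le (s := F) (f := κ)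
    simp at h2
    omega
  refine hajos_not_col hG (Function.update κ u c) ?_
  have key : ∀ x, G.Adj u x → κ x ≠ c := fun x hx h =>
    hc (Finset.mem_image.2 ⟨x, hcon x hx, h⟩)
  intro x y hxy
  by_cases hx : x = u
  · subst hx
    simpa [hxy.ne'] using (key y hxy).symm
  · by_cases hy : y = u
    · subst hy
      simpa [hx] using key x hxy.symm
    · simpa [hx, hy] using hκ x y hxy hx hy

/-- A colouring of `G - {b, c}` cannot extend to `b` and `c`. -/
lemma extend_two {V : Type} [Fintype V] {G : SimpleGraph V} (hG : IsHajos G) {b c : V}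
    (κ : V → Fin 4) (hκ : ∀ u v, G.Adj u v → u ≠ b → u ≠ c → v ≠ b → v ≠ c → κ u ≠ κ v)
    (cb cc : Fin 4) (hne : cb ≠ cc)
    (hb : ∀ x, G.Adj b x → x ≠ c → κ x ≠ cb) (hc : ∀ x, G.Adj c x → x ≠ b → κ x ≠ cc) :
    False := by
  classical
  refine hajos_not_col hG (fun v => if v = b then cb else if v = c then cc else κ v) ?_
  intro u v huv
  have := huv.ne
  have h1 := hκ u v huv
  have h2 := hb u
  have h3 := hb v
  have h4 := hc u
  have h5 := hc v
  have h6 := huv.symm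
  grind

/-- A colouring of `G - {a, b, c}` cannot extend to `a`, `b` and `c`. -/
lemma extend_three {V : Type} [Fintype V] {G : SimpleGraph V} {S A : Finset V} (C : Cfg G S A)
    {a b c : V} (E : Enum A a b c) (κ : V → Fin 4)
    (hκ : ∀ u v, G.Adj u v → u ≠ a → u ≠ b → u ≠ c → v ≠ a → v ≠ b → v ≠ c → κ u ≠ κ v)
    (ca cb cc : Fin 4) (hab : G.Adj a b → ca ≠ cb) (hac : G.Adj a c → ca ≠ cc)
    (hbc : G.Adj b c → cb ≠ cc) (ha : ∀ x ∈ nbr G S a, κ x ≠ ca) (hb : ∀ x ∈ nbr G S b, κ x ≠ cb)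
    (hc : ∀ x ∈ nbr G S c, κ x ≠ cc) : False := by
  classical
  refine hajos_not_col C.hajos
    (fun v => if v = a then ca else if v = b then cb else if v = c then cc else κ v) ?_
  have key : ∀ u ∈ A, ∀ x, G.Adj u x → x ≠ a → x ≠ b → x ≠ c → x ∈ nbr G S u := by
    intro u hu x hx h1 h2 h3
    rw [mem_nbr]
    rcases C.closed u hu x hx with h | h
    · have := E.all x h
      tauto
    · exact ⟨h, hx⟩
  have ka := key a E.ha
  have kb := key b E.hb
  have kc := key c E.hc
  have e1 := E.ab
  have e2 := E.ac
  have e3 := E.bc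
  intro u v huv
  have h0 := huv.ne
  have h1 := hκ u v huv
  have h6 := huv.symm
  by_cases ua : u = a
  · subst ua
    have := ka v huv
    have := ha v
    grind
  by_cases ub : u = b
  · subst ub
    have := kb v huv
    have := hb v
    grind
  by_cases uc : u = c
  · subst uc
    have := kc v huv
    have := hc v
    grind
  by_cases va : v = a
  · subst va
    have := ka u h6
    have := ha u
    grind
  by_cases vb : v = b
  · subst vb
    have := kb u h6
    have := hb u
    grind
  by_cases vc : v = c
  · subst vc
    have := kc u h6
    have := hc u
    grind
  grind

/-- Two adjacent vertices of degree four cannot share exactly two of their other neighbours.  For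
a colouring as in `hajos_path` the remaining neighbours `z` and `z'` get different colours, and
then the two lists of free colours allow distinct choices at `b` and `c`. -/
lemma two_deg4 {V : Type} [Fintype V] {G : SimpleGraph V} (hG : IsHajos G) {b c x y z z' : V}
    (hbc : G.Adj b c) (hb : ∀ v, G.Adj b v → v = c ∨ v = x ∨ v = y ∨ v = z)
    (hc : ∀ v, G.Adj c v → v = b ∨ v = x ∨ v = y ∨ v = z')
    (hbz : G.Adj b z) (hcz : G.Adj c z') (hzc : z ≠ c) (hzb : z' ≠ b) (hzz : z ≠ z') : False := by
  obtain ⟨κ, hκ, hne⟩ := hajos_path hG hbz.symm hbc hcz hzc hzb.symm hzz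
  have key : ∀ k1 k2 k3 k4 : Fin 4, k3 ≠ k4 → ∃ cb cc, cb ≠ cc ∧ k1 ≠ cb ∧ k2 ≠ cb ∧ k3 ≠ cb ∧
      k1 ≠ cc ∧ k2 ≠ cc ∧ k4 ≠ cc := by decide
  obtain ⟨cb, cc, h0, h1, h2, h3, h4, h5, h6⟩ := key (κ x) (κ y) (κ z) (κ z') hne
  refine extend_two hG κ hκ cb cc h0 ?_ ?_
  · intro v hv hvc
    rcases hb v hv with rfl | rfl | rfl | rfl
    · exact absurd rfl hvc
    all_goals assumption
  · intro v hv hvc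
    rcases hc v hv with rfl | rfl | rfl | rfl
    · exact absurd rfl hvc
    all_goals assumption

section Counting

variable {V : Type} [Fintype V] {G : SimpleGraph V} {S A : Finset V}

lemma Cfg.two_le (C : Cfg G S A) {a b c : V} (E : Enum A a b c) : 2 ≤ (nbr G S a).card := by
  classical
  by_contra! h
  obtain ⟨x, hx, hxF⟩ := hajos_degree C.hajos a (insert b (insert c (nbr G S a))) (by
    have := Finset.card_insert_le c (nbr G S a)
    have := Finset.card_insert_le b (insert c (nbr G S a))
    omega)
  simp only [Finset.mem_insert, mem_nbr, not_or] at hxF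
  have := hx.ne
  rcases C.closed a E.ha x hx with h | h
  · have := E.all x h
    tauto
  · tauto

lemma Cfg.three_le (C : Cfg G S A) {a b c : V} (E : Enum A a b c) (hac : ¬ G.Adj a c) :
    3 ≤ (nbr G S a).card := by
  classical
  by_contra! h
  obtain ⟨x, hx, hxF⟩ := hajos_degree C.hajos a (insert b (nbr G S a)) (by
    have := Finset.card_insert_le b (nbr G S a)
    omega)
  simp only [Finset.mem_insert, mem_nbr, not_or] at hxF
  have := hx.ne
  rcases C.closed a E.ha x hx with h | h
  · rcases E.all x h with rfl | rfl | rfl <;> tauto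
  · tauto

lemma Cfg.four_le (C : Cfg G S A) {a b c : V} (E : Enum A a b c) (hab : ¬ G.Adj a b)
    (hac : ¬ G.Adj a c) : 4 ≤ (nbr G S a).card := by
  classical
  by_contra! h
  obtain ⟨x, hx, hxF⟩ := hajos_degree C.hajos a (nbr G S a) (by omega)
  simp only [mem_nbr] at hxF
  have := hx.ne
  rcases C.closed a E.ha x hx with h | h
  · rcases E.all x h with rfl | rfl | rfl <;> tauto
  · tauto

lemma Cfg.inter_le [DecidableEq V] (C : Cfg G S A) {u v : V} (hu : u ∈ A) (hv : v ∈ A)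
    (huv : u ≠ v) : (nbr G S u ∩ nbr G S v).card ≤ 2 := by
  by_contra! h
  obtain ⟨s, hs, t, ht, r, hr, h1, h2, h3⟩ := Finset.two_lt_card.1 h
  simp only [Finset.mem_inter, mem_nbr] at hs ht hr
  exact C.share u hu v hv huv s hs.1.1 t ht.1.1 r hr.1.1 h1 h2 h3 hs.1.2 ht.1.2 hr.1.2
    hs.2.2 ht.2.2 hr.2.2

lemma Cfg.union_le [DecidableEq V] (C : Cfg G S A) (u v : V) :
    (nbr G S u ∪ nbr G S v).card ≤ 5 := by
  rw [← C.cardS]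
  exact Finset.card_le_card (Finset.union_subset (nbr_subset u) (nbr_subset v))

/-- `A` does not span exactly one edge.  Counting gives a vertex `e` of `S` adjacent to `a` and `b`
but not to `c`, and two neighbours in `S` common to `a` and `c`, and to `b` and `c`; this is
incompatible with planarity. -/
lemma Cfg.one_edge (C : Cfg G S A) {a b c : V} (E : Enum A a b c) (hab : G.Adj a b)
    (hac : ¬ G.Adj a c) (hbc : ¬ G.Adj b c) : False := by
  classical
  have ca := C.three_le E hac
  have cb := C.three_le E.swap.rot hbc
  have cc := C.four_le E.swap (fun h => hbc h.symm) (fun h => hac h.symm)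
  have iac := C.inter_le E.ha E.hc E.ac
  have ibc := C.inter_le E.hb E.hc E.bc
  have sc := Finset.card_le_card (nbr_subset (G := G) (S := S) c)
  have uac := C.union_le a c
  have ubc := C.union_le b c
  have e1 := Finset.card_union_add_card_inter (nbr G S a) (nbr G S c)
  have e2 := Finset.card_union_add_card_inter (nbr G S b) (nbr G S c)
  have d1 := Finset.card_sdiff_add_card_inter (nbr G S a) (nbr G S c)
  have d2 := Finset.card_sdiff_add_card_inter (nbr G S b) (nbr G S c)
  have d3 := Finset.card_sdiff_add_card_eq_card (nbr_subset (G := G) (S := S) c)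
  have cS := C.cardS
  obtain ⟨e, he⟩ := Finset.card_pos.1 (show 0 < (nbr G S a \ nbr G S c).card by omega)
  obtain ⟨e', he'⟩ := Finset.card_pos.1 (show 0 < (nbr G S b \ nbr G S c).card by omega)
  obtain ⟨p, hp, q, hq, hpq⟩ := Finset.one_lt_card.1
    (show 1 < (nbr G S a ∩ nbr G S c).card by omega)
  obtain ⟨p', hp', q', hq', hpq'⟩ := Finset.one_lt_card.1
    (show 1 < (nbr G S b ∩ nbr G S c).card by omega)
  have hee : e = e' := Finset.card_le_one.1 (show (S \ nbr G S c).card ≤ 1 by omega)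
    e (by simp_all [mem_nbr]) e' (by simp_all [mem_nbr])
  subst hee
  simp only [Finset.mem_inter, Finset.mem_sdiff, mem_nbr] at he he' hp hq hp' hq'
  have hep : e ≠ p := by rintro rfl; tauto
  have heq : e ≠ q := by rintro rfl; tauto
  -- otherwise `a` and `b` share the three vertices `e`, `p`, `q`
  obtain ⟨m, hm, hmp, hmq⟩ : ∃ m, ((m ∈ S ∧ G.Adj b m) ∧ m ∈ S ∧ G.Adj c m) ∧ m ≠ p ∧ m ≠ q := by
    by_contra! hcon
    have h1 := hcon p' hp'
    have h2 := hcon q' hq'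
    have h3 : G.Adj b p ∧ G.Adj b q := by
      by_cases h : p' = p
      · subst h
        have := h2 (Ne.symm hpq')
        subst this
        exact ⟨hp'.1.2, hq'.1.2⟩
      · have := h1 h
        subst this
        have : q' = p := by
          by_contra h'
          exact hpq' (h2 h').symm
        subst this
        exact ⟨hq'.1.2, hp'.1.2⟩
    exact C.share a E.ha b E.hb E.ab e he.1.1 p hp.1.1 q hq.1.1 hep heq hpq
      he.1.2 hp.1.2 hq.1.2 he'.1.2 h3.1 h3.2
  have hme : m ≠ e := by rintro rfl; tauto
  exact C.third_via a E.ha c E.hc b E.hb E.ac E.bc.symm p hp.1.1 q hq.1.1 e he.1.1 m hm.1.1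
    hpq hep heq hmp hmq hme hp.1.2 hq.1.2 hp.2.2 hq.2.2 hab hm.2.2 hm.1.2 he'.1.2

/-- `A` spans an edge: two vertices with four neighbours each in `S` would share three. -/
lemma Cfg.no_edge (C : Cfg G S A) {a b c : V} (E : Enum A a b c) (hab : ¬ G.Adj a b)
    (hac : ¬ G.Adj a c) (hbc : ¬ G.Adj b c) : False := by
  classical
  have ca := C.four_le E hab hac
  have cb := C.four_le E.rot hbc (fun h => hab h.symm)
  have i := C.inter_le E.ha E.hb E.ab
  have u := C.union_le a b
  have e := Finset.card_union_add_card_inter (nbr G S a) (nbr G S b)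
  omega

end Counting

/-! ### The triangle case -/

section Triangle

variable {V : Type} [Fintype V] {G : SimpleGraph V} {S A : Finset V}

lemma Cfg.tri_inter_le [DecidableEq V] (C : Cfg G S A) {a b c : V} (E : Enum A a b c)
    (hab : G.Adj a b) (hac : G.Adj a c) (hbc : G.Adj b c) :
    (nbr G S a ∩ nbr G S b).card ≤ 1 := by
  by_contra! h
  obtain ⟨s, hs, t, ht, hst⟩ := Finset.one_lt_card.1 h
  simp only [Finset.mem_inter, mem_nbr] at hs ht
  by_cases hr : ∃ r ∈ nbr G S c, r ≠ s ∧ r ≠ t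
  · obtain ⟨r, hr, h1, h2⟩ := hr
    rw [mem_nbr] at hr
    exact C.third a E.ha b E.hb c E.hc E.ab s hs.1.1 t ht.1.1 r hr.1 hst h1 h2 hs.1.2 ht.1.2
      hs.2.2 ht.2.2 hac hbc hr.2
  · push Not at hr
    have hsub : nbr G S c ⊆ {s, t} := by
      intro r h
      have := hr r h
      simp only [Finset.mem_insert, Finset.mem_singleton]
      tauto
    have h2 := C.two_le E.rot.rot
    have h3 : ({s, t} : Finset V).card = 2 := Finset.card_pair hst
    have heq := Finset.eq_of_subset_of_card_le hsub (by omega)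
    have hs' : s ∈ nbr G S c := by rw [heq]; simp
    have ht' : t ∈ nbr G S c := by rw [heq]; simp
    exact C.tri_two a E.ha b E.hb c E.hc hab hac hbc s hs.1.1 t ht.1.1 hst hs.1.2 hs.2.2
      (mem_nbr.1 hs').2 ht.1.2 ht.2.2 (mem_nbr.1 ht').2

lemma Cfg.tri_no_common (C : Cfg G S A) {a b c : V} (E : Enum A a b c)
    (hab : G.Adj a b) (hac : G.Adj a c) (hbc : G.Adj b c) (s : V) (ha : s ∈ nbr G S a)
    (hb : s ∈ nbr G S b) (hc : s ∈ nbr G S c) : False := by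
  classical
  have i1 := C.tri_inter_le E hab hac hbc
  have i2 := C.tri_inter_le E.rot hbc hab.symm hac.symm
  have i3 := C.tri_inter_le E.rot.rot hac.symm hbc.symm hab
  obtain ⟨a', ha', h1⟩ := Finset.exists_mem_ne (C.two_le E) s
  obtain ⟨b', hb', h2⟩ := Finset.exists_mem_ne (C.two_le E.rot) s
  obtain ⟨c', hc', h3⟩ := Finset.exists_mem_ne (C.two_le E.rot.rot) s
  have key : ∀ {X Y : Finset V}, (X ∩ Y).card ≤ 1 → s ∈ X → s ∈ Y → ∀ {x y}, x ∈ X → y ∈ Y →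
      x ≠ s → x ≠ y := by
    rintro X Y h hX hY x y hx hy hxs rfl
    exact hxs (Finset.card_le_one.1 h x (by simp [hx, hy]) s (by simp [hX, hY]))
  have h4 := key i1 ha hb ha' hb' h1
  have h5 := key i2 hb hc hb' hc' h2
  have h6 := key i3 hc ha hc' ha' h3
  rw [mem_nbr] at ha hb hc ha' hb' hc'
  exact C.tri_one a E.ha b E.hb c E.hc hab hac hbc s ha.1 ha.2 hb.2 hc.2 a' ha'.1 b' hb'.1 c' hc'.1
    h1 h2 h3 h4 h6.symm h5 ha'.2 hb'.2 hc'.2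

/-- Corners with only two neighbours in `S` have disjoint neighbourhoods in `S`. -/
lemma Cfg.tri_disj (C : Cfg G S A) {a b c : V} (E : Enum A a b c)
    (hab : G.Adj a b) (hac : G.Adj a c) (hbc : G.Adj b c) (kb : (nbr G S b).card = 2)
    (kc : (nbr G S c).card = 2) (s : V) (hb : s ∈ nbr G S b) (hc : s ∈ nbr G S c) : False := by
  classical
  have i := C.tri_inter_le E.rot hbc hab.symm hac.symm
  obtain ⟨z, hz, h1⟩ := Finset.exists_mem_ne (C.two_le E.rot) s
  obtain ⟨z', hz', h2⟩ := Finset.exists_mem_ne (C.two_le E.rot.rot) s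
  have hzz : z ≠ z' := by
    rintro rfl
    exact h1 (Finset.card_le_one.1 i z (by simp [hz, hz']) s (by simp [hb, hc]))
  have eb : nbr G S b = {s, z} := (Finset.eq_of_subset_of_card_le (by
    intro x; simp; rintro (rfl | rfl) <;> assumption)
    (by rw [kb, Finset.card_pair h1.symm])).symm
  have ec : nbr G S c = {s, z'} := (Finset.eq_of_subset_of_card_le (by
    intro x; simp; rintro (rfl | rfl) <;> assumption)
    (by rw [kc, Finset.card_pair h2.symm])).symm
  have mb : ∀ x ∈ nbr G S b, x = s ∨ x = z := by rw [eb]; simp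
  have mc : ∀ x ∈ nbr G S c, x = s ∨ x = z' := by rw [ec]; simp
  have hzS := mem_nbr.1 hz
  have hzS' := mem_nbr.1 hz'
  refine two_deg4 C.hajos (x := a) (y := s) (z := z) (z' := z') hbc ?_ ?_ hzS.2 hzS'.2 ?_ ?_ hzz
  · intro v hv
    have := hv.ne
    rcases C.closed b E.hb v hv with h | h
    · have := E.all v h; tauto
    · have := mb v (mem_nbr.2 ⟨h, hv⟩); tauto
  · intro v hv
    have := hv.ne
    rcases C.closed c E.hc v hv with h | h
    · have := E.all v h; tauto
    · have := mc v (mem_nbr.2 ⟨h, hv⟩); tauto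
  · rintro rfl; exact C.disj _ E.hc hzS.1
  · rintro rfl; exact C.disj _ E.hb hzS'.1

lemma Cfg.sum_le [DecidableEq V] (C : Cfg G S A) (a b c : V) :
    (nbr G S a).card + (nbr G S b).card + (nbr G S c).card ≤ 5 + (nbr G S a ∩ nbr G S b).card +
      (nbr G S a ∩ nbr G S c).card + (nbr G S b ∩ nbr G S c).card := by
  have e1 := Finset.card_union_add_card_inter (nbr G S a) (nbr G S b)
  have e2 := Finset.card_union_add_card_inter (nbr G S a ∪ nbr G S b) (nbr G S c)
  have e3 := Finset.card_union_le (nbr G S a ∩ nbr G S c) (nbr G S b ∩ nbr G S c)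
  rw [Finset.union_inter_distrib_right] at e2
  have h : (nbr G S a ∪ nbr G S b ∪ nbr G S c).card ≤ 5 := by
    rw [← C.cardS]
    exact Finset.card_le_card (Finset.union_subset (Finset.union_subset (nbr_subset a)
      (nbr_subset b)) (nbr_subset c))
  omega

/-- The triangle case with two corners of degree four.  The neighbourhoods in `S` are then
`{v2, v3, v5}`, `{v1, v2}` and `{v3, v4}`, and a colouring from `hajos_two_paths` extends. -/
lemma Cfg.tri_two_small (C : Cfg G S A) {a b c : V} (E : Enum A a b c)
    (hab : G.Adj a b) (hac : G.Adj a c) (hbc : G.Adj b c) (kb : (nbr G S b).card = 2)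
    (kc : (nbr G S c).card = 2) : False := by
  classical
  have dbc := C.tri_disj E hab hac hbc kb kc
  have sum := C.sum_le a b c
  have i1 := C.tri_inter_le E hab hac hbc
  have i2 : (nbr G S b ∩ nbr G S c).card = 0 := by
    rw [Finset.card_eq_zero, Finset.eq_empty_iff_forall_notMem]
    intro x hx
    rw [Finset.mem_inter] at hx
    exact dbc x hx.1 hx.2
  have i3 := C.tri_inter_le E.rot.rot hac.symm hbc.symm hab
  rw [Finset.inter_comm] at i3
  have ka2 := C.two_le E
  have ka : (nbr G S a).card ≠ 2 := by
    intro ka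
    have h1 : (nbr G S a ∩ nbr G S b).card = 0 := by
      rw [Finset.card_eq_zero, Finset.eq_empty_iff_forall_notMem]
      intro x hx
      rw [Finset.mem_inter] at hx
      exact C.tri_disj E.rot.rot hac.symm hbc.symm hab ka kb x hx.1 hx.2
    have h2 : (nbr G S a ∩ nbr G S c).card = 0 := by
      rw [Finset.card_eq_zero, Finset.eq_empty_iff_forall_notMem]
      intro x hx
      rw [Finset.mem_inter] at hx
      exact C.tri_disj E.rot hbc hab.symm hac.symm kc ka x hx.2 hx.1
    omega
  obtain ⟨v2, h2⟩ := Finset.card_pos.1 (show 0 < (nbr G S a ∩ nbr G S b).card by omega)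
  obtain ⟨v3, h3⟩ := Finset.card_pos.1 (show 0 < (nbr G S a ∩ nbr G S c).card by omega)
  rw [Finset.mem_inter] at h2 h3
  obtain ⟨v1, h1, h12⟩ := Finset.exists_mem_ne (C.two_le E.rot) v2
  obtain ⟨v4, h4, h34⟩ := Finset.exists_mem_ne (C.two_le E.rot.rot) v3
  have h23 : v2 ≠ v3 := by rintro rfl; exact dbc _ h2.2 h3.2
  have eb : nbr G S b = {v1, v2} := (Finset.eq_of_subset_of_card_le (by
    intro x; simp; rintro (rfl | rfl) <;> tauto)
    (by rw [kb, Finset.card_pair h12])).symm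
  have ec : nbr G S c = {v4, v3} := (Finset.eq_of_subset_of_card_le (by
    intro x; simp; rintro (rfl | rfl) <;> tauto)
    (by rw [kc, Finset.card_pair h34])).symm
  have ka3 : (nbr G S a).card = 3 := by omega
  obtain ⟨v5, h5, h52, h53⟩ : ∃ v5 ∈ nbr G S a, v5 ≠ v2 ∧ v5 ≠ v3 := by
    by_contra! hcon
    have : nbr G S a ⊆ {v2, v3} := by
      intro x hx
      have := hcon x hx
      simp only [Finset.mem_insert, Finset.mem_singleton]
      tauto
    have := Finset.card_le_card this
    rw [Finset.card_pair h23] at this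
    omega
  have ea : nbr G S a = {v2, v3, v5} := (Finset.eq_of_subset_of_card_le (by
    intro x; simp; rintro (rfl | rfl | rfl) <;> tauto)
    (by rw [ka3, Finset.card_eq_three.2 ⟨v2, v3, v5, h23, h52.symm, h53.symm, rfl⟩])).symm
  have h24 : v2 ≠ v4 := by rintro rfl; exact dbc _ h2.2 h4
  have off : ∀ {x : V} {u v}, x ∈ nbr G S u → v ∈ A → v ≠ x := by
    rintro x u v hx hv rfl
    exact C.disj _ hv (mem_nbr.1 hx).1
  obtain ⟨κ, hκ, n23, n24⟩ := hajos_two_paths C.hajos (mem_nbr.1 h2.1).2.symm (mem_nbr.1 h3.1).2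
    (mem_nbr.1 h2.2).2.symm hbc (mem_nbr.1 h4).2 E.ab E.ac (off h4 E.ha) (off h3.1 E.hb)
    (off h4 E.hb) (off h2.1 E.hc) (off h3.1 E.hc) h23 h24
  have key : ∀ k1 k2 k3 k4 k5 : Fin 4, k2 ≠ k3 → k2 ≠ k4 → ∃ ca cb cc,
      (ca ≠ cb ∧ ca ≠ cc ∧ cb ≠ cc) ∧
      (k2 ≠ ca ∧ k3 ≠ ca ∧ k5 ≠ ca) ∧ (k1 ≠ cb ∧ k2 ≠ cb) ∧ (k4 ≠ cc ∧ k3 ≠ cc) := by decide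
  obtain ⟨ca, cb, cc, ⟨n1, n2, n3⟩, m1, m2, m3⟩ :=
    key (κ v1) (κ v2) (κ v3) (κ v4) (κ v5) n23 n24
  refine extend_three C E κ hκ ca cb cc (fun _ => n1) (fun _ => n2) (fun _ => n3) ?_ ?_ ?_
  · rw [ea]; simpa using m1
  · rw [eb]; simpa using m2
  · rw [ec]; simpa using m3

/-- The triangle case with at most one corner of degree four.  The neighbourhoods in `S` are then
`{v1, v3, v4}`, `{v2, v3, v5}` and `{v1, v2}`, and a colouring from `hajos_star` extends. -/
lemma Cfg.tri_one_small (C : Cfg G S A) {a b c : V} (E : Enum A a b c)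
    (hab : G.Adj a b) (hac : G.Adj a c) (hbc : G.Adj b c) (ka : 3 ≤ (nbr G S a).card)
    (kb : 3 ≤ (nbr G S b).card) : False := by
  classical
  have sum := C.sum_le a b c
  have i1 := C.tri_inter_le E hab hac hbc
  have i2 := C.tri_inter_le E.rot hbc hab.symm hac.symm
  have i3 := C.tri_inter_le E.rot.rot hac.symm hbc.symm hab
  rw [Finset.inter_comm] at i3
  have kc := C.two_le E.rot.rot
  have common := C.tri_no_common E hab hac hbc
  obtain ⟨v1, h1⟩ := Finset.card_pos.1 (show 0 < (nbr G S a ∩ nbr G S c).card by omega)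
  obtain ⟨v2, h2⟩ := Finset.card_pos.1 (show 0 < (nbr G S b ∩ nbr G S c).card by omega)
  obtain ⟨v3, h3⟩ := Finset.card_pos.1 (show 0 < (nbr G S a ∩ nbr G S b).card by omega)
  rw [Finset.mem_inter] at h1 h2 h3
  have h12 : v1 ≠ v2 := by rintro rfl; exact common _ h1.1 h2.1 h1.2
  have h13 : v1 ≠ v3 := by rintro rfl; exact common _ h1.1 h3.2 h1.2
  have h23 : v2 ≠ v3 := by rintro rfl; exact common _ h3.1 h2.1 h2.2
  have third : ∀ {X : Finset V} {x y : V}, X.card = 3 → x ∈ X → y ∈ X → x ≠ y →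
      ∃ z, z ≠ x ∧ z ≠ y ∧ X = {x, y, z} := by
    intro X x y hX hx hy hxy
    obtain ⟨z, hz⟩ := Finset.card_pos.1 (show 0 < (X \ {x, y}).card by
      have := Finset.le_card_sdiff {x, y} X
      rw [Finset.card_pair hxy] at this
      omega)
    simp only [Finset.mem_sdiff, Finset.mem_insert, Finset.mem_singleton, not_or] at hz
    refine ⟨z, hz.2.1, hz.2.2, (Finset.eq_of_subset_of_card_le ?_ ?_).symm⟩
    · intro w; simp; rintro (rfl | rfl | rfl) <;> tauto
    · rw [hX, Finset.card_eq_three.2 ⟨x, y, z, hxy, Ne.symm hz.2.1, Ne.symm hz.2.2, rfl⟩]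
  obtain ⟨v4, h41, h43, ea⟩ := third (show (nbr G S a).card = 3 by omega) h1.1 h3.1 h13
  obtain ⟨v5, h52, h53, eb⟩ := third (show (nbr G S b).card = 3 by omega) h2.1 h3.2 h23
  have ec : nbr G S c = {v1, v2} := (Finset.eq_of_subset_of_card_le (by
    intro x; simp; rintro (rfl | rfl) <;> tauto)
    (by rw [Finset.card_pair h12]; omega)).symm
  have h4 : v4 ∈ nbr G S a := by rw [ea]; simp
  have h42 : v2 ≠ v4 := by rintro rfl; exact common _ h4 h2.1 h2.2
  have off : ∀ {x : V} {u v}, x ∈ nbr G S u → v ∈ A → v ≠ x := by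
    rintro x u v hx hv rfl
    exact C.disj _ hv (mem_nbr.1 hx).1
  obtain ⟨κ, hκ, n1, n2, n3⟩ := hajos_star C.hajos hab hac (mem_nbr.1 h1.1).2 (mem_nbr.1 h3.1).2
    (mem_nbr.1 h4).2 (mem_nbr.1 h1.2).2 (mem_nbr.1 h2.2).2 (mem_nbr.1 h3.2).2 (mem_nbr.1 h2.1).2
    E.bc (off h2.1 E.ha) (off h1.1 E.hb) (off h3.1 E.hc) (off h4 E.hb) (off h4 E.hc)
    h12.symm h23 h42 h13 h41.symm h43.symm
  have key : ∀ k1 k2 k3 k4 k5 : Fin 4, k2 ≠ k1 → k2 ≠ k3 → k2 ≠ k4 → ∃ ca cb cc,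
      (ca ≠ cb ∧ ca ≠ cc ∧ cb ≠ cc) ∧
      (k1 ≠ ca ∧ k3 ≠ ca ∧ k4 ≠ ca) ∧ (k2 ≠ cb ∧ k3 ≠ cb ∧ k5 ≠ cb) ∧ (k1 ≠ cc ∧ k2 ≠ cc) := by
    decide
  obtain ⟨ca, cb, cc, ⟨m1, m2, m3⟩, l1, l2, l3⟩ :=
    key (κ v1) (κ v2) (κ v3) (κ v4) (κ v5) n1 n2 n3
  refine extend_three C E κ hκ ca cb cc (fun _ => m1) (fun _ => m2) (fun _ => m3) ?_ ?_ ?_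
  · rw [ea]; simpa using l1
  · rw [eb]; simpa using l2
  · rw [ec]; simpa using l3

lemma Cfg.no_triangle (C : Cfg G S A) {a b c : V} (E : Enum A a b c)
    (hab : G.Adj a b) (hac : G.Adj a c) (hbc : G.Adj b c) : False := by
  have ka := C.two_le E
  have kb := C.two_le E.rot
  have kc := C.two_le E.rot.rot
  rcases ka.eq_or_lt with ha | ha
  · rcases kb.eq_or_lt with hb | hb
    · exact C.tri_two_small E.rot.rot hac.symm hbc.symm hab ha.symm hb.symm
    · rcases kc.eq_or_lt with hc | hc
      · exact C.tri_two_small E.rot hbc hab.symm hac.symm hc.symm ha.symm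
      · exact C.tri_one_small E.rot hbc hab.symm hac.symm hb hc
  · rcases kb.eq_or_lt with hb | hb
    · rcases kc.eq_or_lt with hc | hc
      · exact C.tri_two_small E hab hac hbc hb.symm hc.symm
      · exact C.tri_one_small E.rot.rot hac.symm hbc.symm hab hc ha
    · exact C.tri_one_small E hab hac hbc ha hb

end Triangle

/-! ### The path case -/

section Path

variable {V : Type} [Fintype V] {G : SimpleGraph V} {S A : Finset V}

/-- `G` restricted to `A ∪ S` is the obstruction `O5` apart from the edges inside `S`: `y` is `t1`,
while `p, p', q', q` are `t2, t3, t4, t5` and `a, b, c` are the vertices `u, v, w`. -/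
structure IsO5 (G : SimpleGraph V) (S A : Finset V) (a b c y p p' q' q : V) : Prop where
  enum : Enum A a b c
  ab : G.Adj a b
  bc : G.Adj b c
  ac : ¬ G.Adj a c
  nodup : [y, p, p', q', q].Nodup
  memS : ∀ x, x ∈ S ↔ x = y ∨ x = p ∨ x = p' ∨ x = q' ∨ x = q
  na : ∀ x ∈ S, G.Adj a x ↔ x = y ∨ x = p ∨ x = p'
  nb : ∀ x ∈ S, G.Adj b x ↔ x = y ∨ x = p' ∨ x = q'
  nc : ∀ x ∈ S, G.Adj c x ↔ x = y ∨ x = q' ∨ x = q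

/-- Colours for the path `a b c` when `a` sees the colours `k1, k2, k3`, `b` sees `k3, k4` and `c`
sees `k1, k4, k5` in `S`. -/
lemma colour_path : ∀ k1 k2 k3 k4 k5 : Fin 4, ∃ ca cb cc : Fin 4,
    (ca ≠ cb ∧ cb ≠ cc) ∧ (k1 ≠ ca ∧ k2 ≠ ca ∧ k3 ≠ ca) ∧ (k3 ≠ cb ∧ k4 ≠ cb) ∧
    (k1 ≠ cc ∧ k4 ≠ cc ∧ k5 ≠ cc) := by decide

lemma colour_free : ∀ w x y z : Fin 4, (w = y ∨ w = z ∨ x = y ∨ x = z ∨ y = z) →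
    ∃ c, w ≠ c ∧ x ≠ c ∧ y ≠ c ∧ z ≠ c := by decide

set_option maxRecDepth 100000 in
set_option synthInstance.maxSize 1000 in
/-- Colours for `y` and `b` in `O5` that leave, by a coincidence among the colours around `a` and
around `c`, a free colour for each of these two. -/
lemma colour_yb : ∀ k2 k3 k4 k5 kz : Fin 4, ∃ cy cb : Fin 4,
    kz ≠ cy ∧ cy ≠ cb ∧ k3 ≠ cb ∧ k4 ≠ cb ∧
    (cy = k2 ∨ cy = k3 ∨ cb = k2 ∨ cb = k3 ∨ k2 = k3) ∧
    (cy = k4 ∨ cy = k5 ∨ cb = k4 ∨ cb = k5 ∨ k4 = k5) := by decide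

/-- Colours for `y, a, b, c` in `O5`, given the colours `k2, …, k5` of `p, p', q', q` and one
forbidden colour `kz` for `y`. -/
lemma colour_O5 (k2 k3 k4 k5 kz : Fin 4) : ∃ cy : Fin 4, kz ≠ cy ∧ ∃ ca cb cc : Fin 4,
    (cy ≠ ca ∧ cy ≠ cb ∧ cy ≠ cc) ∧ (ca ≠ cb ∧ cb ≠ cc) ∧ (k2 ≠ ca ∧ k3 ≠ ca) ∧
    (k3 ≠ cb ∧ k4 ≠ cb) ∧ (k4 ≠ cc ∧ k5 ≠ cc) := by
  obtain ⟨cy, cb, h1, h2, h3, h4, h5, h6⟩ := colour_yb k2 k3 k4 k5 kz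
  obtain ⟨ca, a1, a2, a3, a4⟩ := colour_free cy cb k2 k3 h5
  obtain ⟨cc, c1, c2, c3, c4⟩ := colour_free cy cb k4 k5 h6
  exact ⟨cy, h1, ca, cb, cc, ⟨a1, h2, c1⟩, ⟨a2.symm, c2⟩, ⟨a3, a4⟩, ⟨h3, h4⟩, c3, c4⟩

/-- If `A` spans the path `a b c`, the ends do not have two common neighbours in `S` while `c` has
degree four.  By planarity the neighbours of `b` in `S` are among these two, so a colouring of
`G - {b, c}` with `a` and the last neighbour of `c` coloured differently extends. -/
lemma Cfg.path_two_common (C : Cfg G S A) {a b c s t : V} (E : Enum A a b c)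
    (hab : G.Adj a b) (hbc : G.Adj b c) (hac : ¬ G.Adj a c) (hst : s ≠ t)
    (sa : s ∈ nbr G S a) (sc : s ∈ nbr G S c) (ta : t ∈ nbr G S a) (tc : t ∈ nbr G S c)
    (kc : (nbr G S c).card = 3) : False := by
  classical
  rw [mem_nbr] at sa ta
  have mb : ∀ r ∈ S, G.Adj b r → r = s ∨ r = t := by
    intro r hr hbr
    by_contra! h
    exact C.third a E.ha c E.hc b E.hb E.ac s sa.1 t ta.1 r hr hst h.1 h.2 sa.2 ta.2
      (mem_nbr.1 sc).2 (mem_nbr.1 tc).2 hab hbc.symm hbr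
  obtain ⟨q, hq, hqs, hqt⟩ : ∃ q ∈ nbr G S c, q ≠ s ∧ q ≠ t := by
    by_contra! hcon
    have : nbr G S c ⊆ {s, t} := by
      intro x hx
      have := hcon x hx
      simp only [Finset.mem_insert, Finset.mem_singleton]
      tauto
    have := Finset.card_le_card this
    rw [Finset.card_pair hst] at this
    omega
  have ec : nbr G S c = {s, t, q} := (Finset.eq_of_subset_of_card_le (by
    intro x; simp; rintro (rfl | rfl | rfl) <;> tauto)
    (by rw [kc, Finset.card_eq_three.2 ⟨s, t, q, hst, hqs.symm, hqt.symm, rfl⟩])).symm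
  have mc : ∀ r ∈ S, G.Adj c r → r = s ∨ r = t ∨ r = q := by
    intro r hr hcr
    have : r ∈ nbr G S c := mem_nbr.2 ⟨hr, hcr⟩
    rw [ec] at this
    simpa using this
  rw [mem_nbr] at sc tc hq
  have off : ∀ {x v}, x ∈ S → v ∈ A → x ≠ v := by
    rintro x v hx hv rfl
    exact C.disj _ hv hx
  obtain ⟨κ, hκ, hne⟩ := hajos_path C.hajos hab hbc hq.2 E.ac (off hq.1 E.hb).symm
    (off hq.1 E.ha).symm
  -- `c` takes the colour of `a`, so the neighbours of `b` carry at most three colours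
  obtain ⟨k, k1, k2, k3⟩ : ∃ k : Fin 4, k ≠ κ a ∧ k ≠ κ s ∧ k ≠ κ t := by
    generalize κ a = x, κ s = y, κ t = z
    revert x y z
    decide
  have hs : κ a ≠ κ s := hκ a s sa.2 E.ab E.ac (off sa.1 E.hb) (off sa.1 E.hc)
  have ht : κ a ≠ κ t := hκ a t ta.2 E.ab E.ac (off ta.1 E.hb) (off ta.1 E.hc)
  refine extend_two C.hajos κ hκ k (κ a) k1 ?_ ?_
  · intro x hx hxc
    rcases C.closed b E.hb x hx with h | h
    · rcases E.all x h with rfl | rfl | rfl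
      · exact k1.symm
      · exact absurd rfl hx.ne
      · exact absurd rfl hxc
    · rcases mb x h hx with rfl | rfl
      · exact k2.symm
      · exact k3.symm
  · intro x hx hxb
    rcases C.closed c E.hc x hx with h | h
    · rcases E.all x h with rfl | rfl | rfl
      · exact absurd hx.symm hac
      · exact absurd rfl hxb
      · exact absurd rfl hx.ne
    · rcases mc x h hx with rfl | rfl | rfl
      · exact hs.symm
      · exact ht.symm
      · exact hne.symm

/-- The path case with `N(a) ∩ S = {y, p, p'}` and `N(c) ∩ S = {y, q, q'}`, once the labels are
chosen so that `b` is adjacent to neither `p` nor `q`. -/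
lemma Cfg.path_isO5 (C : Cfg G S A) {a b c y p p' q' q : V} (E : Enum A a b c)
    (hab : G.Adj a b) (hbc : G.Adj b c) (hac : ¬ G.Adj a c) (nd : [y, p, p', q', q].Nodup)
    (mS : ∀ x, x ∈ S ↔ x = y ∨ x = p ∨ x = p' ∨ x = q' ∨ x = q)
    (na : ∀ x ∈ S, G.Adj a x ↔ x = y ∨ x = p ∨ x = p')
    (nc : ∀ x ∈ S, G.Adj c x ↔ x = y ∨ x = q' ∨ x = q)
    (hp : ¬ G.Adj b p) (hq : ¬ G.Adj b q) : IsO5 G S A a b c y p p' q' q := by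
  classical
  have yS : y ∈ S := by simp [mS]
  have pS : p ∈ S := by simp [mS]
  have pS' : p' ∈ S := by simp [mS]
  have qS : q ∈ S := by simp [mS]
  have qS' : q' ∈ S := by simp [mS]
  have off : ∀ {x v}, x ∈ S → v ∈ A → x ≠ v := by
    rintro x v hx hv rfl
    exact C.disj _ hv hx
  have mb : ∀ x ∈ S, G.Adj b x → x = y ∨ x = p' ∨ x = q' := by
    intro x hx hbx
    rcases (mS x).1 hx with rfl | rfl | rfl | rfl | rfl <;> tauto
  have kb := C.two_le E.rot
  -- two of the three candidates are neighbours of `b`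
  have pair : ∀ u v, (∀ x ∈ S, G.Adj b x → x = u ∨ x = v) → G.Adj b u ∧ G.Adj b v := by
    intro u v h
    have hsub : nbr G S b ⊆ {u, v} := by
      intro x hx
      rw [mem_nbr] at hx
      simpa using h x hx.1 hx.2
    have heq := Finset.eq_of_subset_of_card_le hsub (Finset.card_le_two.trans kb)
    have hu : u ∈ nbr G S b := by rw [heq]; simp
    have hv : v ∈ nbr G S b := by rw [heq]; simp
    exact ⟨(mem_nbr.1 hu).2, (mem_nbr.1 hv).2⟩
  simp only [List.nodup_cons, List.mem_cons, not_or, List.not_mem_nil, not_false_eq_true,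
    List.nodup_nil, and_true] at nd
  obtain ⟨⟨d1, d2, d3, d4⟩, ⟨d5, d6, d7⟩, ⟨d8, d9⟩, d10⟩ := nd
  -- the neighbourhood of a vertex of `A`, from its neighbours in `S`
  have full : ∀ {u v w} {T : V → Prop}, Enum A u v w → (∀ x ∈ S, G.Adj u x → T x) →
      ∀ x, G.Adj u x → x = v ∨ x = w ∨ T x := by
    intro u v w T E' h x hx
    rcases C.closed u E'.ha x hx with h' | h'
    · have := E'.all x h'
      have := hx.ne
      tauto
    · exact Or.inr (Or.inr (h x h' hx))
  by_cases hy : G.Adj b y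
  · by_cases hq' : G.Adj b q'
    · by_cases hp' : G.Adj b p'
      · refine ⟨E, hab, hbc, hac, by simp; tauto, mS, na, ?_, nc⟩
        intro x hx
        exact ⟨mb x hx, by rintro (rfl | rfl | rfl) <;> assumption⟩
      · exfalso
        refine two_deg4 C.hajos (b := c) (c := b) (x := y) (y := q') (z := q) (z' := a) hbc.symm
          ?_ ?_ ((nc q qS).2 (by simp)) hab.symm (off qS E.hb) E.ac (off qS E.ha)
        · intro x hx
          have h1 := full E.swap (fun x hx => (nc x hx).1) x hx
          have h2 : x ≠ a := by rintro rfl; exact hac hx.symm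
          tauto
        · intro x hx
          have h1 := full E.rot (T := fun x => x = y ∨ x = q') (fun x hS hx => by
            have h2 : x ≠ p' := by rintro rfl; exact hp' hx
            have := mb x hS hx
            tauto) x hx
          tauto
    · exfalso
      have mb' : ∀ x ∈ S, G.Adj b x → x = y ∨ x = p' := by
        intro x hS hx
        have h2 : x ≠ q' := by rintro rfl; exact hq' hx
        have := mb x hS hx
        tauto
      refine two_deg4 C.hajos (b := a) (c := b) (x := y) (y := p') (z := p) (z' := c) hab
        ?_ ?_ ((na p pS).2 (by simp)) hbc (off pS E.hb) E.ac.symm (off pS E.hc)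
      · intro x hx
        have h1 := full E (fun x hx => (na x hx).1) x hx
        have h2 : x ≠ c := by rintro rfl; exact hac hx
        tauto
      · intro x hx
        have h1 := full E.rot mb' x hx
        tauto
  · exfalso
    have mb' : ∀ x ∈ S, G.Adj b x → x = p' ∨ x = q' := by
      intro x hS hx
      have h2 : x ≠ y := by rintro rfl; exact hy hx
      have := mb x hS hx
      tauto
    obtain ⟨κ, hκ⟩ := hajos_del C.hajos b
    obtain ⟨ca, cb, cc, ⟨n1, n2⟩, l1, l2, l3⟩ := colour_path (κ y) (κ p) (κ p') (κ q') (κ q)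
    refine extend_three C E κ (fun u v h _ hu _ _ hv _ => hκ u v h hu hv) ca cb cc (fun _ => n1)
      (fun h => absurd h hac) (fun _ => n2) ?_ ?_ ?_
    · intro x hx
      rw [mem_nbr] at hx
      rcases (na x hx.1).1 hx.2 with rfl | rfl | rfl <;> tauto
    · intro x hx
      rw [mem_nbr] at hx
      rcases mb' x hx.1 hx.2 with rfl | rfl <;> tauto
    · intro x hx
      rw [mem_nbr] at hx
      rcases (nc x hx.1).1 hx.2 with rfl | rfl | rfl <;> tauto

set_option maxHeartbeats 1000000 in
/-- The path case.  Counting and `path_two_common` leave a single vertex `y` of `S` adjacent to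
both ends, and by planarity `b` misses another neighbour of each end. -/
lemma Cfg.path (C : Cfg G S A) {a b c : V} (E : Enum A a b c)
    (hab : G.Adj a b) (hbc : G.Adj b c) (hac : ¬ G.Adj a c) :
    ∃ y p p' q' q, IsO5 G S A a b c y p p' q' q := by
  classical
  have ka := C.three_le E hac
  have kc := C.three_le E.swap (fun h => hac h.symm)
  have u := C.union_le a c
  have i := C.inter_le E.ha E.hc E.ac
  have e := Finset.card_union_add_card_inter (nbr G S a) (nbr G S c)
  by_cases h2 : 1 < (nbr G S a ∩ nbr G S c).card
  · exfalso
    obtain ⟨s, hs, t, ht, hst⟩ := Finset.one_lt_card.1 h2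
    rw [Finset.mem_inter] at hs ht
    rcases kc.eq_or_lt with h | h
    · exact C.path_two_common E hab hbc hac hst hs.1 hs.2 ht.1 ht.2 h.symm
    · exact C.path_two_common E.swap hbc.symm hab.symm (fun h => hac h.symm) hst hs.2 hs.1
        ht.2 ht.1 (by omega)
  · obtain ⟨y, hy⟩ := Finset.card_eq_one.1
      (show (nbr G S a ∩ nbr G S c).card = 1 by omega)
    have hmem : y ∈ nbr G S a ∩ nbr G S c := by rw [hy]; simp
    rw [Finset.mem_inter] at hmem
    have split : ∀ X : Finset V, X.card = 3 → y ∈ X → ∃ p p', p ≠ y ∧ p' ≠ y ∧ p ≠ p' ∧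
        ∀ x, x ∈ X ↔ x = y ∨ x = p ∨ x = p' := by
      intro X hX hyX
      obtain ⟨p, p', hpp, h⟩ := Finset.card_eq_two.1
        (show (X.erase y).card = 2 by rw [Finset.card_erase_of_mem hyX, hX])
      have h' : ∀ x, x ∈ X.erase y ↔ x = p ∨ x = p' := by rw [h]; simp
      simp only [Finset.mem_erase] at h'
      refine ⟨p, p', ((h' p).2 (by simp)).1, ((h' p').2 (by simp)).1, hpp, fun x => ?_⟩
      have := h' x
      by_cases hx : x = y
      · subst hx; tauto
      · tauto
    obtain ⟨p, p', p1, p2, p3, hpa⟩ := split _ (by omega) hmem.1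
    obtain ⟨q, q', q1, q2, q3, hqc⟩ := split _ (by omega) hmem.2
    have hcommon : ∀ x, x ∈ nbr G S a → x ∈ nbr G S c → x = y := by
      intro x h1 h2
      have : x ∈ nbr G S a ∩ nbr G S c := Finset.mem_inter.2 ⟨h1, h2⟩
      rw [hy] at this
      simpa using this
    have hunion : nbr G S a ∪ nbr G S c = S := Finset.eq_of_subset_of_card_le
      (Finset.union_subset (nbr_subset a) (nbr_subset c)) (by rw [C.cardS]; omega)
    have mS : ∀ x, x ∈ S ↔ x = y ∨ x = p ∨ x = p' ∨ x = q' ∨ x = q := by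
      intro x
      rw [← hunion, Finset.mem_union, hpa, hqc]
      tauto
    have cross : ∀ x z, x = p ∨ x = p' → z = q ∨ z = q' → x ≠ z := by
      rintro x z hx hz rfl
      have h1 : x = y := hcommon x ((hpa x).2 (Or.inr hx)) ((hqc x).2 (Or.inr hz))
      rcases hx with rfl | rfl <;> tauto
    have c1 := cross p q (by simp) (by simp)
    have c2 := cross p q' (by simp) (by simp)
    have c3 := cross p' q (by simp) (by simp)
    have c4 := cross p' q' (by simp) (by simp)
    have na : ∀ x ∈ S, G.Adj a x ↔ x = y ∨ x = p ∨ x = p' := by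
      intro x hx
      rw [← hpa, mem_nbr]
      tauto
    have nc : ∀ x ∈ S, G.Adj c x ↔ x = y ∨ x = q ∨ x = q' := by
      intro x hx
      rw [← hqc, mem_nbr]
      tauto
    have yS : y ∈ S := by simp [mS]
    have pS : p ∈ S := by simp [mS]
    have pS' : p' ∈ S := by simp [mS]
    have qS : q ∈ S := by simp [mS]
    have qS' : q' ∈ S := by simp [mS]
    have ap := (na p pS).2 (by simp)
    have ap' := (na p' pS').2 (by simp)
    have ay := (na y yS).2 (by simp)
    have cq := (nc q qS).2 (by simp)
    have cq' := (nc q' qS').2 (by simp)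
    have cy := (nc y yS).2 (by simp)
    have hp : ¬ (G.Adj b p ∧ G.Adj b p') := by
      rintro ⟨h1, h2⟩
      exact C.third_via b E.hb a E.ha c E.hc E.ab.symm E.ac p pS p' pS' q qS y yS p3 c1.symm
        c3.symm p1.symm p2.symm q1.symm h1 h2 ap ap' hbc ay cy cq
    have hq : ¬ (G.Adj b q ∧ G.Adj b q') := by
      rintro ⟨h1, h2⟩
      exact C.third_via b E.hb c E.hc a E.ha E.bc E.ac.symm q qS q' qS' p pS y yS q3 c1
        c2 q1.symm q2.symm p1.symm h1 h2 cq cq' hab.symm cy ay ap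
    have main : ∀ p p' q' q, [y, p, p', q', q].Nodup →
        (∀ x, x ∈ S ↔ x = y ∨ x = p ∨ x = p' ∨ x = q' ∨ x = q) →
        (∀ x ∈ S, G.Adj a x ↔ x = y ∨ x = p ∨ x = p') →
        (∀ x ∈ S, G.Adj c x ↔ x = y ∨ x = q' ∨ x = q) → ¬ G.Adj b p → ¬ G.Adj b q →
        ∃ y p p' q' q, IsO5 G S A a b c y p p' q' q := fun p p' q' q h1 h2 h3 h4 h5 h6 =>
      ⟨y, p, p', q', q, C.path_isO5 E hab hbc hac h1 h2 h3 h4 h5 h6⟩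
    have perm : ∀ p p' q' q, p ≠ y → p' ≠ y → q ≠ y → q' ≠ y → p ≠ p' → q ≠ q' → p ≠ q → p ≠ q' →
        p' ≠ q → p' ≠ q' → [y, p, p', q', q].Nodup := by
      intro p p' q' q h1 h2 h3 h4 h5 h6 h7 h8 h9 h10
      simp [*, Ne.symm h1, Ne.symm h2, Ne.symm h3, Ne.symm h4, Ne.symm h6]
    by_cases b1 : G.Adj b p <;> by_cases b2 : G.Adj b q
    · exact main p' p q q' (perm _ _ _ _ p2 p1 q2 q1 p3.symm q3.symm c4 c3 c2 c1)
        (fun x => (mS x).trans (Iff.of_eq (by ac_rfl)))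
        (fun x hx => (na x hx).trans (Iff.of_eq (by ac_rfl))) nc
        (fun h => hp ⟨b1, h⟩) (fun h => hq ⟨b2, h⟩)
    · exact main p' p q' q (perm _ _ _ _ p2 p1 q1 q2 p3.symm q3 c3 c4 c1 c2)
        (fun x => (mS x).trans (Iff.of_eq (by ac_rfl)))
        (fun x hx => (na x hx).trans (Iff.of_eq (by ac_rfl)))
        (fun x hx => (nc x hx).trans (Iff.of_eq (by ac_rfl)))
        (fun h => hp ⟨b1, h⟩) b2
    · exact main p p' q q' (perm _ _ _ _ p1 p2 q2 q1 p3 q3.symm c2 c1 c4 c3)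
        (fun x => (mS x).trans (Iff.of_eq (by ac_rfl))) na nc b1 (fun h => hq ⟨b2, h⟩)
    · exact main p p' q' q (perm _ _ _ _ p1 p2 q1 q2 p3 q3 c1 c2 c3 c4) mS na
        (fun x hx => (nc x hx).trans (Iff.of_eq (by ac_rfl))) b1 b2

lemma Cfg.exists_isO5 (C : Cfg G S A) : ∃ a b c y p p' q' q, IsO5 G S A a b c y p p' q' q := by
  classical
  obtain ⟨a, b, c, hab, hac, hbc, hA⟩ := Finset.card_eq_three.1 C.cardA
  have E : Enum A a b c := ⟨by simp [hA], by simp [hA], by simp [hA], hab, hac, hbc, by simp [hA]⟩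
  by_cases h1 : G.Adj a b <;> by_cases h2 : G.Adj a c <;> by_cases h3 : G.Adj b c
  · exact (C.no_triangle E h1 h2 h3).elim
  · exact ⟨b, a, c, C.path E.swap.rot h1.symm h2 h3⟩
  · exact ⟨a, b, c, C.path E h1 h3 h2⟩
  · exact (C.one_edge E h1 h2 h3).elim
  · exact ⟨b, c, a, C.path E.rot h3 h2.symm (fun h => h1 h.symm)⟩
  · exact (C.one_edge E.rot.rot h2.symm (fun h => h3 h.symm) h1).elim
  · exact (C.one_edge E.rot h3 (fun h => h1 h.symm) (fun h => h2 h.symm)).elim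
  · exact (C.no_edge E h1 h2 h3).elim

/-- The vertex `y` joined to all of `a`, `b`, `c` has at least two neighbours outside `A`: with at
most one, `z`, every colouring of the rest extends to `a`, `b`, `c` and `y`. -/
lemma IsO5.degree (C : Cfg G S A) {a b c y p p' q' q : V} (h : IsO5 G S A a b c y p p' q' q)
    (z : V) (hz : ∀ x, G.Adj y x → x = a ∨ x = b ∨ x = c ∨ x = z) : False := by
  classical
  have yS : y ∈ S := by simp [h.memS]
  have off : ∀ {x v}, x ∈ S → v ∈ A → x ≠ v := by
    rintro x v hx hv rfl
    exact C.disj _ hv hx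
  have ya := off yS h.enum.ha
  have yb := off yS h.enum.hb
  have yc := off yS h.enum.hc
  have nd := h.nodup
  simp only [List.nodup_cons, List.mem_cons, not_or, List.not_mem_nil, not_false_eq_true,
    List.nodup_nil, and_true] at nd
  obtain ⟨κ, hκ⟩ := hajos_del C.hajos y
  obtain ⟨cy, n6, ca, cb, cc, ⟨n3, n4, n5⟩, ⟨n1, n2⟩, l1, l2, l3⟩ :=
    colour_O5 (κ p) (κ p') (κ q') (κ q) (κ z)
  refine extend_three C h.enum (Function.update κ y cy) ?_ ca cb cc (fun _ => n1)
    (fun h' => absurd h' h.ac) (fun _ => n2) ?_ ?_ ?_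
  · intro u v huv ua ub uc va vb vc
    by_cases hu : u = y
    · subst hu
      have := hz v huv
      obtain rfl : v = z := by tauto
      simpa [huv.ne'] using n6.symm
    · by_cases hv : v = y
      · subst hv
        have := hz u huv.symm
        obtain rfl : u = z := by tauto
        simpa [huv.ne] using n6
      · simpa [hu, hv] using hκ u v huv hu hv
  · intro x hx
    rw [mem_nbr] at hx
    by_cases hxy : x = y
    · subst hxy; simpa using n3
    · rw [Function.update_of_ne hxy]
      rcases (h.na x hx.1).1 hx.2 with rfl | rfl | rfl <;> tauto
  · intro x hx
    rw [mem_nbr] at hx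
    by_cases hxy : x = y
    · subst hxy; simpa using n4
    · rw [Function.update_of_ne hxy]
      rcases (h.nb x hx.1).1 hx.2 with rfl | rfl | rfl <;> tauto
  · intro x hx
    rw [mem_nbr] at hx
    by_cases hxy : x = y
    · subst hxy; simpa using n5
    · rw [Function.update_of_ne hxy]
      rcases (h.nc x hx.1).1 hx.2 with rfl | rfl | rfl <;> tauto

end Path

/-! ### From the separation to the configuration -/

/-- A separation as in the theorem provides a configuration with `S = V(G1 ∩ G2)` and
`A = V(G1) \ V(G2)`. -/
lemma cfg_of_separation {V : Type} [Fintype V] {G : SimpleGraph V} (hG : IsHajos G)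
    {G1 G2 : G.Subgraph} (hsep : IsSeparation G1 G2 5) (hcard : G1.verts.ncard = 8)
    (hplanar : SubgraphPairPlanar G1 (G1.verts ∩ G2.verts)) {S A : Finset V}
    (hS : ∀ x, x ∈ S ↔ x ∈ G1.verts ∩ G2.verts) (hA : ∀ x, x ∈ A ↔ x ∈ G1.verts \ G2.verts)
    (hadj : ∀ u ∈ A, ∀ x, G.Adj u x → G1.Adj u x) : Cfg G S A := by
  classical
  have eS : (S : Set V) = G1.verts ∩ G2.verts := Set.ext hS
  have eA : (A : Set V) = G1.verts \ G2.verts := Set.ext hA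
  have cS : S.card = 5 := by rw [← Set.ncard_coe_finset, eS]; exact hsep.2.2.1
  have cA : A.card = 3 := by
    have h := Set.ncard_inter_add_ncard_sdiff_eq_ncard G1.verts G2.verts (Set.toFinite _)
    rw [← Set.ncard_coe_finset, eA]
    have := hsep.2.2.1
    omega
  have vS : ∀ {x}, x ∈ S → x ∈ G1.verts := fun h => ((hS _).1 h).1
  have vA : ∀ {x}, x ∈ A → x ∈ G1.verts := fun h => ((hA _).1 h).1
  have nA : ∀ {x}, x ∈ A → x ∉ G1.verts ∩ G2.verts := fun h h' => ((hA _).1 h).2 h'.2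
  have P : PairPlanar G1.coe {x : G1.verts | (x : V) ∈ G1.verts ∩ G2.verts} := hplanar
  have ne : ∀ {x y : G1.verts}, (x : V) ≠ y → x ≠ y := fun h h' => h (congrArg _ h')
  refine ⟨hG, cS, cA, fun x h h' => nA h ((hS x).1 h'), ?_, ?_, ?_, ?_, ?_, ?_⟩
  · intro u hu x hux
    have h1 := (hadj u hu x hux).snd_mem
    by_cases h : x ∈ G2.verts
    · exact Or.inr ((hS x).2 ⟨h1, h⟩)
    · exact Or.inl ((hA x).2 ⟨h1, h⟩)
  · intro u hu v hv huv s hs t ht r hr st sr tr us ut ur vs vt vr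
    exact planar_share P (u := ⟨u, vA hu⟩) (v := ⟨v, vA hv⟩) (s := ⟨s, vS hs⟩) (t := ⟨t, vS ht⟩)
      (r := ⟨r, vS hr⟩) (ne huv) ((hS _).1 hs) ((hS _).1 ht) ((hS _).1 hr) (ne st) (ne sr) (ne tr)
      (hadj u hu _ us) (hadj u hu _ ut) (hadj u hu _ ur)
      (hadj v hv _ vs) (hadj v hv _ vt) (hadj v hv _ vr)
  · intro u hu v hv w hw huv s hs t ht r hr st rs rt us ut vs vt uw vw wr
    exact planar_share_third P (u := ⟨u, vA hu⟩) (v := ⟨v, vA hv⟩) (w := ⟨w, vA hw⟩)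
      (s := ⟨s, vS hs⟩) (t := ⟨t, vS ht⟩) (r := ⟨r, vS hr⟩) none
      (ne huv) (ne vw.ne) (nA hu) (nA hv) (nA hw) ((hS _).1 hs) ((hS _).1 ht) ((hS _).1 hr)
      (ne st) (ne rs) (ne rt) (hadj u hu _ us) (hadj u hu _ ut) (hadj v hv _ vs) (hadj v hv _ vt)
      (hadj u hu _ uw) (hadj v hv _ vw) (by simp) (hadj w hw _ wr)
  · intro u hu v hv w hw huv hvw s hs t ht r hr m hm st rs rt ms mt mr us ut vs vt uw vm wm wr
    refine planar_share_third P (u := ⟨u, vA hu⟩) (v := ⟨v, vA hv⟩) (w := ⟨w, vA hw⟩)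
      (s := ⟨s, vS hs⟩) (t := ⟨t, vS ht⟩) (r := ⟨r, vS hr⟩) (some ⟨m, vS hm⟩)
      (ne huv) (ne hvw) (nA hu) (nA hv) (nA hw) ((hS _).1 hs) ((hS _).1 ht) ((hS _).1 hr)
      (ne st) (ne rs) (ne rt) (hadj u hu _ us) (hadj u hu _ ut) (hadj v hv _ vs) (hadj v hv _ vt)
      (hadj u hu _ uw) ⟨hadj v hv _ vm, (hadj w hw _ wm).symm⟩ ?_ (hadj w hw _ wr)
    rintro x hx
    obtain rfl := Option.some.inj hx
    exact ⟨(hS _).1 hm, ne ms, ne mt, ne mr⟩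
  · intro a ha b hb c hc ab ac bc s hs t ht st as bs cs at' bt ct
    exact planar_triangle_two P (a := ⟨a, vA ha⟩) (b := ⟨b, vA hb⟩) (c := ⟨c, vA hc⟩)
      (s := ⟨s, vS hs⟩) (t := ⟨t, vS ht⟩) (hadj a ha _ ab) (hadj a ha _ ac) (hadj b hb _ bc)
      ((hS _).1 hs) ((hS _).1 ht) (ne st) (hadj a ha _ as) (hadj b hb _ bs) (hadj c hc _ cs)
      (hadj a ha _ at') (hadj b hb _ bt) (hadj c hc _ ct)
  · intro a ha b hb c hc ab ac bc s hs as bs cs a' ha' b' hb' c' hc' h1 h2 h3 h4 h5 h6 aa bb cc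
    exact planar_triangle_one P (a := ⟨a, vA ha⟩) (b := ⟨b, vA hb⟩) (c := ⟨c, vA hc⟩)
      (s := ⟨s, vS hs⟩) (a' := ⟨a', vS ha'⟩) (b' := ⟨b', vS hb'⟩) (c' := ⟨c', vS hc'⟩)
      (hadj a ha _ ab) (hadj a ha _ ac) (hadj b hb _ bc) (nA ha) (nA hb) (nA hc)
      ((hS _).1 hs) (hadj a ha _ as) (hadj b hb _ bs) (hadj c hc _ cs)
      ((hS _).1 ha') ((hS _).1 hb') ((hS _).1 hc') (ne h1) (ne h2) (ne h3) (ne h4) (ne h5) (ne h6)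
      (hadj a ha _ aa) (hadj b hb _ bb) (hadj c hc _ cc)

set_option maxHeartbeats 2000000 in
/-- A labelling as in `IsO5` is an isomorphism onto `Obs5`: the vertices `0, …, 7` are
`y, p, p', q', q, a, b, c` in this order. -/
lemma isoCarrying_of_isO5 {V : Type} {G : SimpleGraph V} {G1 : G.Subgraph} {T : Set V}
    {S A : Finset V} (hS : ∀ x, x ∈ S ↔ x ∈ T) (hV : ∀ x, x ∈ G1.verts ↔ x ∈ S ∨ x ∈ A)
    (hd : ∀ x ∈ A, x ∉ S) (hadj : ∀ u ∈ A, ∀ x, G.Adj u x ↔ G1.Adj u x)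
    (hind : ∀ x ∈ S, ∀ y ∈ S, ¬ G1.Adj x y)
    {a b c y p p' q' q : V} (h : IsO5 G S A a b c y p p' q' q) :
    IsoCarrying G1 T Obs5 {0, 1, 2, 3, 4} := by
  classical
  have hf : ∀ i, (![y, p, p', q', q, a, b, c] : Fin 8 → V) i ∈ G1.verts := by
    have := h.enum.ha
    have := h.enum.hb
    have := h.enum.hc
    simp [Fin.forall_fin_succ, h.memS, *]
  have sA : ∀ {x z}, x ∈ S → z ∈ A → x ≠ z := by rintro x z hx hz rfl; exact hd x hz hx
  have my : y ∈ S := by simp [h.memS]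
  have mp : p ∈ S := by simp [h.memS]
  have mp' : p' ∈ S := by simp [h.memS]
  have mq' : q' ∈ S := by simp [h.memS]
  have mq : q ∈ S := by simp [h.memS]
  have ma := h.enum.ha
  have mb := h.enum.hb
  have mc := h.enum.hc
  have nd := h.nodup
  simp only [List.nodup_cons, List.mem_cons, List.not_mem_nil, or_false, not_or, not_false_eq_true,
    List.nodup_nil, and_true] at nd
  obtain ⟨⟨n1, n2, n3, n4⟩, ⟨n5, n6, n7⟩, ⟨n8, n9⟩, n10⟩ := nd
  let f : Fin 8 → G1.verts := fun i => ⟨![y, p, p', q', q, a, b, c] i, hf i⟩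
  have inj : Function.Injective f := by
    have nd8 : [y, p, p', q', q, a, b, c].Nodup := by
      have := h.enum.ab
      have := h.enum.ac
      have := h.enum.bc
      simp [sA my, sA mp, sA mp', sA mq', sA mq, *]
    intro i j hij
    have h2 : [y, p, p', q', q, a, b, c].get i = [y, p, p', q', q, a, b, c].get j := by
      have := congrArg Subtype.val hij
      fin_cases i <;> fin_cases j <;> exact this
    exact List.nodup_iff_injective_get.1 nd8 h2
  have sur : Function.Surjective f := by
    rintro ⟨x, hx⟩
    have : ∃ i, ![y, p, p', q', q, a, b, c] i = x := by
      rcases (hV x).1 hx with hx | hx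
      · rcases (h.memS x).1 hx with rfl | rfl | rfl | rfl | rfl
        exacts [⟨0, rfl⟩, ⟨1, rfl⟩, ⟨2, rfl⟩, ⟨3, rfl⟩, ⟨4, rfl⟩]
      · rcases h.enum.all x hx with rfl | rfl | rfl
        exacts [⟨5, rfl⟩, ⟨6, rfl⟩, ⟨7, rfl⟩]
    exact this.imp fun i hi => Subtype.ext hi
  have hle : ∀ i j, i ≤ j → (G1.coe.Adj (f i) (f j) ↔ Obs5.Adj i j) := by
    have aS : ∀ x ∈ S, G1.Adj x a ↔ x = y ∨ x = p ∨ x = p' := fun x hx => by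
      rw [G1.adj_comm, ← hadj a ma, h.na x hx]
    have bS : ∀ x ∈ S, G1.Adj x b ↔ x = y ∨ x = p' ∨ x = q' := fun x hx => by
      rw [G1.adj_comm, ← hadj b mb, h.nb x hx]
    have cS : ∀ x ∈ S, G1.Adj x c ↔ x = y ∨ x = q' ∨ x = q := fun x hx => by
      rw [G1.adj_comm, ← hadj c mc, h.nc x hx]
    have iS : ∀ x ∈ S, ∀ z ∈ S, G1.Adj x z ↔ False := fun x hx z hz =>
      iff_false_intro (hind x hx z hz)
    have gab : G1.Adj a b := (hadj a ma b).1 h.ab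
    have gbc : G1.Adj b c := (hadj b mb c).1 h.bc
    have gac : ¬ G1.Adj a c := fun h' => h.ac ((hadj a ma c).2 h')
    intro i j hij
    fin_cases i <;> fin_cases j <;> first
      | exact absurd hij (by decide)
      | simp [f, Obs5, aS, bS, cS, iS, gab, gbc, gac, my, mp, mp', mq', mq, n1, n2, n3, n4,
          n5, n6, n7, n8, n9, n10, Ne.symm n1, Ne.symm n2, Ne.symm n3, Ne.symm n4, Ne.symm n5,
          Ne.symm n6, Ne.symm n7, Ne.symm n8, Ne.symm n9, Ne.symm n10]
  have hall : ∀ i j, G1.coe.Adj (f i) (f j) ↔ Obs5.Adj i j := by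
    intro i j
    rcases le_total i j with hij | hij
    · exact hle i j hij
    · rw [G1.coe.adj_comm, Obs5.adj_comm]
      exact hle j i hij
  let e : Fin 8 ≃ G1.verts := Equiv.ofBijective f ⟨inj, sur⟩
  let e' : Obs5 ≃g G1.coe := ⟨e, fun {i j} => hall i j⟩
  have hmem : ∀ i : Fin 8, (f i : V) ∈ T ↔ i ∈ ({0, 1, 2, 3, 4} : Set (Fin 8)) := by
    intro i
    rw [← hS]
    have ka := hd a ma
    have kb := hd b mb
    have kc := hd c mc
    fin_cases i <;> simp [f, my, mp, mp', mq', mq, ka, kb, kc]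
  refine ⟨e'.symm, fun x => ?_⟩
  obtain ⟨i, rfl⟩ := sur x
  have : e'.symm (f i) = i := e'.symm_apply_apply i
  rw [this]
  exact hmem i

/-- Lemma 2.4: Let `G` be a Hajós graph and `(G1, G2)` a 5-separation with
`|V(G1)| = 8`, `(G1, V(G1 ∩ G2))` planar, and `V(G1 ∩ G2)` independent in `G1`.  Then
`(G1, V(G1 ∩ G2))` is the 8-vertex obstruction graph `O5`, and the vertex of
`V(G1 ∩ G2)` with three neighbors in `V(G1) \ V(G1 ∩ G2)` has degree at least 5 in `G`. -/
theorem statement4 {V : Type} [Fintype V] (G : SimpleGraph V) (hG : IsHajos G)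
    (G1 G2 : G.Subgraph) (hsep : IsSeparation G1 G2 5)
    (hcard : G1.verts.ncard = 8)
    (hplanar : SubgraphPairPlanar G1 (G1.verts ∩ G2.verts))
    (hind : ∀ x ∈ G1.verts ∩ G2.verts, ∀ y ∈ G1.verts ∩ G2.verts, ¬ G1.Adj x y) :
    IsoCarrying G1 (G1.verts ∩ G2.verts) Obs5 {0,1,2,3,4} ∧
    (∀ x ∈ G1.verts ∩ G2.verts,
      (G1.neighborSet x ∩ (G1.verts \ G2.verts)).ncard = 3 →
        5 ≤ (G.neighborSet x).ncard) := by
  classical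
  let S : Finset V := (G1.verts ∩ G2.verts).toFinite.toFinset
  let A : Finset V := (G1.verts \ G2.verts).toFinite.toFinset
  have hS : ∀ x, x ∈ S ↔ x ∈ G1.verts ∩ G2.verts := fun x => Set.Finite.mem_toFinset _
  have hA : ∀ x, x ∈ A ↔ x ∈ G1.verts \ G2.verts := fun x => Set.Finite.mem_toFinset _
  have hadj : ∀ u ∈ A, ∀ x, G.Adj u x → G1.Adj u x := by
    intro u hu x hux
    have h1 : (G1 ⊔ G2).Adj u x := by rw [hsep.1]; exact hux
    rcases Subgraph.sup_adj.1 h1 with h | h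
    · exact h
    · exact absurd h.fst_mem ((hA u).1 hu).2
  have C : Cfg G S A := cfg_of_separation hG hsep hcard hplanar hS hA hadj
  obtain ⟨a, b, c, y, p, p', q', q, h⟩ := C.exists_isO5
  refine ⟨isoCarrying_of_isO5 hS ?_ C.disj (fun u hu x => ⟨hadj u hu x, fun h => h.adj_sub⟩)
    (fun x hx z hz => hind x ((hS x).1 hx) z ((hS z).1 hz)) h, ?_⟩
  · intro x
    rw [hS, hA]
    by_cases hx : x ∈ G2.verts <;> simp [hx]
  · intro x hx h3
    have hxS := (hS x).2 hx
    have eA : (G1.verts \ G2.verts) = (A : Set V) := (Set.ext hA).symm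
    have hsub : (G1.neighborSet x ∩ (G1.verts \ G2.verts)) = (A : Set V) := by
      rw [eA] at h3 ⊢
      refine Set.eq_of_subset_of_ncard_le Set.inter_subset_right ?_ (Set.toFinite _)
      rw [h3, Set.ncard_coe_finset, C.cardA]
    have hxA : ∀ u ∈ A, G.Adj x u := by
      intro u hu
      have : u ∈ (A : Set V) := hu
      rw [← hsub] at this
      exact Subgraph.Adj.adj_sub this.1
    have ea := (h.na x hxS).1 (hxA a h.enum.ha).symm
    have ec := (h.nc x hxS).1 (hxA c h.enum.hc).symm
    have nd := h.nodup
    simp only [List.nodup_cons, List.mem_cons, List.not_mem_nil, or_false, not_or,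
      not_false_eq_true, List.nodup_nil, and_true] at nd
    obtain rfl : x = y := by
      rcases ea with e | rfl | rfl
      · exact e
      · tauto
      · tauto
    by_contra! hlt
    have hAx : (A : Set V) ⊆ G.neighborSet x := fun u hu => hxA u hu
    have hdiff := Set.ncard_sdiff_add_ncard_of_subset hAx (Set.toFinite _)
    rw [Set.ncard_coe_finset, C.cardA] at hdiff
    have h1 : (G.neighborSet x \ (A : Set V)).ncard ≤ 1 := by omega
    rcases Set.ncard_le_one_iff_eq (Set.toFinite _) |>.1 h1 with h0 | ⟨z, hz⟩
    · refine h.degree C a fun v hv => ?_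
      have : v ∈ A := by
        by_contra hvA
        have : v ∈ G.neighborSet x \ (A : Set V) := ⟨hv, hvA⟩
        simp [h0] at this
      have := h.enum.all v this
      tauto
    · refine h.degree C z fun v hv => ?_
      by_cases hvA : v ∈ A
      · have := h.enum.all v hvA
        tauto
      · have : v ∈ G.neighborSet x \ (A : Set V) := ⟨hv, hvA⟩
        rw [hz] at this
        exact Or.inr (Or.inr (Or.inr this))
end

section
/- Let W be a wheel with center w, and let w1, w2, w3, w4 be distinct neighbors of w occurring on the cycle W − w in this cyclic order. Let P1 be a path from w1 to w3 and P2 a path from w2 to w4 such that P1 and P2 are disjoint from each other and each is internally disjoint from W. Then W ∪ P1 ∪ P2 contains a subdivision of K5. -/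
/-!
The branch vertices are `w1, w2, w3, w4, w`.  Consecutive rim vertices are joined by the four
arcs `Q1, Q2, Q3, Q4` of the rim, the two opposite pairs by `P1` and `P2`, and the center by the
four spokes.  Since the rim is a cycle, the interiors of the arcs together with
`w1, ..., w4` are pairwise disjoint and without repetition, while the interiors of `P1` and `P2`
avoid the wheel and each other.

`hasK5Subdivision_of_interiors` reduces the existence of a `K5`-subdivision to such disjointness
statements about lists of interior vertices, `I i j` being the interior of the path from branch
vertex `i` to branch vertex `j`.
-/

open SimpleGraph

lemma support_eq_cons_interior {V : Type} {G : SimpleGraph V} {u v : V} (p : G.Walk u v)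
    (huv : u ≠ v) : p.support = u :: (walkInterior p ++ [v]) := by
  cases p with
  | nil => exact absurd rfl huv
  | cons h q =>
    have hne : q.support ≠ [] := q.support_ne_nil
    have h2 := List.dropLast_append_getLast hne
    rw [SimpleGraph.Walk.getLast_support] at h2
    simp [walkInterior, h2]

lemma walkInterior_eq_of_support {V : Type} {G : SimpleGraph V} {u v : V} {p : G.Walk u v}
    {I : List V} (h : p.support = u :: (I ++ [v])) : walkInterior p = I := by
  simp [walkInterior, h]

/-- A `K5`-subdivision can be specified by its branch vertices `b` and the lists `I i j` of
interior vertices of the paths for `i < j`. -/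
lemma hasK5Subdivision_of_interiors {V : Type} (H : SimpleGraph V) (b : Fin 5 → V)
    (hb : Function.Injective b) (I : Fin 5 → Fin 5 → List V)
    (hp : ∀ i j, i < j → ∃ p : H.Walk (b i) (b j), p.support = b i :: (I i j ++ [b j]))
    (hnd : ∀ i j, i < j → (I i j).Nodup)
    (hbI : ∀ i j, i < j → ∀ k, b k ∉ I i j)
    (hdis : ∀ i j i' j', i < j → i' < j' → (i, j) ≠ (i', j') → ∀ x ∈ I i j, x ∉ I i' j') :
    HasK5Subdivision H := by
  -- The definition asks for walks for all ordered pairs; those with `j ≤ i` are irrelevant.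
  have hp' : ∀ i j, ∃ p : H.Walk (b i) (b j), i < j → p.support = b i :: (I i j ++ [b j]) := by
    intro i j
    rcases lt_trichotomy i j with h | h | h
    · obtain ⟨p, hp⟩ := hp i j h
      exact ⟨p, fun _ => hp⟩
    · subst h
      exact ⟨SimpleGraph.Walk.nil, fun h => absurd h (lt_irrefl _)⟩
    · obtain ⟨p, _⟩ := hp j i h
      exact ⟨p.reverse, fun h' => absurd h' h.asymm⟩
  choose P hP using hp'
  refine ⟨b, hb, P, ?_, ?_, ?_⟩
  · intro i j hij
    rw [SimpleGraph.Walk.isPath_def, hP i j hij]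
    have h1 := hbI i j hij i
    have h2 := hbI i j hij j
    have h3 : b i ≠ b j := fun h => hij.ne (hb h)
    have h4 := hnd i j hij
    rw [List.nodup_cons, List.nodup_append]
    refine ⟨by simp [h1, h3], h4, by simp, ?_⟩
    rintro x hx y hy rfl
    rw [List.mem_singleton] at hy
    exact h2 (hy ▸ hx)
  · intro i j hij k
    rw [walkInterior_eq_of_support (hP i j hij)]
    exact hbI i j hij k
  · intro i j i' j' hij hij' hne x hx
    rw [walkInterior_eq_of_support (hP i j hij)] at hx
    rw [hP i' j' hij']
    have h1 := hdis i j i' j' hij hij' hne x hx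
    have h2 : x ≠ b i' := fun h => hbI i j hij i' (h ▸ hx)
    have h3 : x ≠ b j' := fun h => hbI i j hij j' (h ▸ hx)
    simp [h1, h2, h3]

set_option maxHeartbeats 1000000 in
/-- The combinatorial core: `A1, ..., A4` are the interiors of the four rim arcs and `B1, B2` those
of the two chords.  The arc with interior `A4` runs from `w4` to `w1` along the rim, whence the
reversal in `eQ4`. -/
lemma hasK5Subdivision_of_wheel_interiors {V : Type} (H : SimpleGraph V) {w w1 w2 w3 w4 : V}
    {A1 A2 A3 A4 B1 B2 : List V}
    (hw : w ≠ w1 ∧ w ≠ w2 ∧ w ≠ w3 ∧ w ≠ w4)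
    (hn : w1 ≠ w2 ∧ w1 ≠ w3 ∧ w1 ≠ w4 ∧ w2 ≠ w3 ∧ w2 ≠ w4 ∧ w3 ≠ w4)
    (hspokeWalk : ∀ x ∈ ({w1, w2, w3, w4} : Set V),
      ∃ p : H.Walk x w, p.support = x :: ([] ++ [w]))
    (eQ1 : ∃ p : H.Walk w1 w2, p.support = w1 :: (A1 ++ [w2]))
    (eQ2 : ∃ p : H.Walk w2 w3, p.support = w2 :: (A2 ++ [w3]))
    (eQ3 : ∃ p : H.Walk w3 w4, p.support = w3 :: (A3 ++ [w4]))
    (eQ4 : ∃ p : H.Walk w1 w4, p.support = w1 :: (A4.reverse ++ [w4]))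
    (eP1 : ∃ p : H.Walk w1 w3, p.support = w1 :: (B1 ++ [w3]))
    (eP2 : ∃ p : H.Walk w2 w4, p.support = w2 :: (B2 ++ [w4]))
    (hnd : (A1 ++ [w2] ++ (A2 ++ [w3] ++ (A3 ++ [w4] ++ (A4 ++ [w1])))).Nodup)
    (hwC : w ∉ w1 :: (A1 ++ [w2] ++ (A2 ++ [w3] ++ (A3 ++ [w4] ++ (A4 ++ [w1])))))
    (ndP1 : (w1 :: (B1 ++ [w3])).Nodup) (ndP2 : (w2 :: (B2 ++ [w4])).Nodup)
    (hdisj : ∀ x ∈ w1 :: (B1 ++ [w3]), x ∉ w2 :: (B2 ++ [w4]))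
    (hint1 : ∀ x ∈ B1, x ∉ insert w
      {x | x ∈ w1 :: (A1 ++ [w2] ++ (A2 ++ [w3] ++ (A3 ++ [w4] ++ (A4 ++ [w1]))))})
    (hint2 : ∀ x ∈ B2, x ∉ insert w
      {x | x ∈ w1 :: (A1 ++ [w2] ++ (A2 ++ [w3] ++ (A3 ++ [w4] ++ (A4 ++ [w1]))))}) :
    HasK5Subdivision H := by
  obtain ⟨n01, n02, n03, n04⟩ := hw
  obtain ⟨n12, n13, n14, n23, n24, n34⟩ := hn
  simp only [Set.mem_insert_iff, Set.mem_ofPred_eq, List.mem_cons, List.mem_append,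
    List.not_mem_nil, or_false, not_or] at hint1 hint2 hwC hdisj
  simp only [List.nodup_append', List.nodup_cons, List.disjoint_append_right,
    List.disjoint_append_left, List.disjoint_singleton, List.singleton_disjoint, List.mem_append,
    List.mem_cons, List.not_mem_nil, or_false, not_or] at hnd ndP1 ndP2
  have ndA : A1.Nodup ∧ A2.Nodup ∧ A3.Nodup ∧ A4.Nodup := by
    clear * - hnd
    tauto
  have dA : A1.Disjoint A2 ∧ A1.Disjoint A3 ∧ A1.Disjoint A4 ∧ A2.Disjoint A3 ∧ A2.Disjoint A4 ∧
      A3.Disjoint A4 := by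
    clear * - hnd
    tauto
  have m1 : w1 ∉ A1 ∧ w2 ∉ A1 ∧ w3 ∉ A1 ∧ w4 ∉ A1 := by
    clear * - hnd
    tauto
  have m2 : w1 ∉ A2 ∧ w2 ∉ A2 ∧ w3 ∉ A2 ∧ w4 ∉ A2 := by
    clear * - hnd
    tauto
  have m3 : w1 ∉ A3 ∧ w2 ∉ A3 ∧ w3 ∉ A3 ∧ w4 ∉ A3 := by
    clear * - hnd
    tauto
  have m4 : w1 ∉ A4 ∧ w2 ∉ A4 ∧ w3 ∉ A4 ∧ w4 ∉ A4 := by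
    clear * - hnd
    tauto
  obtain ⟨d12, d13, d14, d23, d24, d34⟩ := dA
  have dB : B1.Disjoint B2 := fun x h1 h2 => (hdisj x (Or.inr (Or.inl h1))).2.1 h2
  have hbr : ∀ A : List V, w ∉ A → (w1 ∉ A ∧ w2 ∉ A ∧ w3 ∉ A ∧ w4 ∉ A) → ∀ x ∈ A,
      x ≠ w ∧ x ≠ w1 ∧ x ≠ w2 ∧ x ≠ w3 ∧ x ≠ w4 := fun A h0 h x hx =>
    ⟨ne_of_mem_of_not_mem hx h0, ne_of_mem_of_not_mem hx h.1, ne_of_mem_of_not_mem hx h.2.1,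
      ne_of_mem_of_not_mem hx h.2.2.1, ne_of_mem_of_not_mem hx h.2.2.2⟩
  clear hnd hdisj
  have hA1 : ∀ x ∈ A1, (x ≠ w ∧ x ≠ w1 ∧ x ≠ w2 ∧ x ≠ w3 ∧ x ≠ w4) ∧
      x ∉ A2 ∧ x ∉ A3 ∧ x ∉ A4 ∧ x ∉ B1 ∧ x ∉ B2 := fun x hx =>
    ⟨hbr A1 (by tauto) m1 x hx, d12 hx, d13 hx, d14 hx,
      fun h => by have := hint1 x h; tauto, fun h => by have := hint2 x h; tauto⟩
  have hA2 : ∀ x ∈ A2, (x ≠ w ∧ x ≠ w1 ∧ x ≠ w2 ∧ x ≠ w3 ∧ x ≠ w4) ∧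
      x ∉ A1 ∧ x ∉ A3 ∧ x ∉ A4 ∧ x ∉ B1 ∧ x ∉ B2 := fun x hx =>
    ⟨hbr A2 (by tauto) m2 x hx, d12.symm hx, d23 hx, d24 hx,
      fun h => by have := hint1 x h; tauto, fun h => by have := hint2 x h; tauto⟩
  have hA3 : ∀ x ∈ A3, (x ≠ w ∧ x ≠ w1 ∧ x ≠ w2 ∧ x ≠ w3 ∧ x ≠ w4) ∧
      x ∉ A1 ∧ x ∉ A2 ∧ x ∉ A4 ∧ x ∉ B1 ∧ x ∉ B2 := fun x hx =>
    ⟨hbr A3 (by tauto) m3 x hx, d13.symm hx, d23.symm hx, d34 hx,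
      fun h => by have := hint1 x h; tauto, fun h => by have := hint2 x h; tauto⟩
  have hA4 : ∀ x ∈ A4, (x ≠ w ∧ x ≠ w1 ∧ x ≠ w2 ∧ x ≠ w3 ∧ x ≠ w4) ∧
      x ∉ A1 ∧ x ∉ A2 ∧ x ∉ A3 ∧ x ∉ B1 ∧ x ∉ B2 := fun x hx =>
    ⟨hbr A4 (by tauto) m4 x hx, d14.symm hx, d24.symm hx, d34.symm hx,
      fun h => by have := hint1 x h; tauto, fun h => by have := hint2 x h; tauto⟩
  have hB1 : ∀ x ∈ B1, (x ≠ w ∧ x ≠ w1 ∧ x ≠ w2 ∧ x ≠ w3 ∧ x ≠ w4) ∧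
      x ∉ A1 ∧ x ∉ A2 ∧ x ∉ A3 ∧ x ∉ A4 ∧ x ∉ B2 := by
    intro x hx
    have h1 := hint1 x hx
    have h2 := dB hx
    tauto
  have hB2 : ∀ x ∈ B2, (x ≠ w ∧ x ≠ w1 ∧ x ≠ w2 ∧ x ≠ w3 ∧ x ≠ w4) ∧
      x ∉ A1 ∧ x ∉ A2 ∧ x ∉ A3 ∧ x ∉ A4 ∧ x ∉ B1 := by
    intro x hx
    have h1 := hint2 x hx
    have h2 := dB.symm hx
    tauto
  have hA4r : ∀ x ∈ A4.reverse, (x ≠ w ∧ x ≠ w1 ∧ x ≠ w2 ∧ x ≠ w3 ∧ x ≠ w4) ∧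
      x ∉ A1 ∧ x ∉ A2 ∧ x ∉ A3 ∧ x ∉ B1 ∧ x ∉ B2 := fun x hx => hA4 x (List.mem_reverse.1 hx)
  -- Only the entries above the diagonal matter.
  refine hasK5Subdivision_of_interiors H ![w1, w2, w3, w4, w] ?_
    ![![[], A1, B1, A4.reverse, []], ![[], [], A2, B2, []], ![[], [], [], A3, []],
      ![[], [], [], [], []], ![[], [], [], [], []]] ?_ ?_ ?_ ?_
  · intro i j hij
    fin_cases i <;> fin_cases j <;> first
      | rfl
      | exact absurd hij (by simp [n01, n02, n03, n04, n12, n13, n14, n23, n24, n34, n01.symm,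
          n02.symm, n03.symm, n04.symm, n12.symm, n13.symm, n14.symm, n23.symm, n24.symm, n34.symm])
  · intro i j hij
    fin_cases i <;> fin_cases j <;> first
      | exact absurd hij (by decide)
      | exact eQ1
      | exact eQ2
      | exact eQ3
      | exact eQ4
      | exact eP1
      | exact eP2
      | exact hspokeWalk _ (by simp)
  · intro i j hij
    obtain ⟨nd1, nd2, nd3, nd4⟩ := ndA
    fin_cases i <;> fin_cases j <;> first
      | exact absurd hij (by decide)
      | exact List.nodup_nil
      | exact nd1
      | exact nd2
      | exact nd3
      | exact List.nodup_reverse.2 nd4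
      | exact ndP1.2.1
      | exact ndP2.2.1
  · intro i j hij k hx
    -- The first component of `hA1, ..., hB2` says that an interior vertex is no branch vertex.
    have main : ∀ x, (x ≠ w ∧ x ≠ w1 ∧ x ≠ w2 ∧ x ≠ w3 ∧ x ≠ w4) →
        x ≠ (![w1, w2, w3, w4, w] : Fin 5 → V) k := by
      rintro x ⟨h0, h1, h2, h3, h4⟩
      fin_cases k
      exacts [h1, h2, h3, h4, h0]
    fin_cases i <;> fin_cases j <;> first
      | exact absurd hij (by decide)
      | exact List.not_mem_nil hx
      | exact main _ (hA1 _ hx).1 rfl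
      | exact main _ (hA2 _ hx).1 rfl
      | exact main _ (hA3 _ hx).1 rfl
      | exact main _ (hA4r _ hx).1 rfl
      | exact main _ (hB1 _ hx).1 rfl
      | exact main _ (hB2 _ hx).1 rfl
  · intro i j i' j' hij hij' hne x hx
    fin_cases i <;> fin_cases j <;> first
      | exact absurd hij (by decide)
      | exact absurd hx List.not_mem_nil
      | (fin_cases i' <;> fin_cases j' <;> first
          | exact absurd hij' (by decide)
          | exact absurd rfl hne
          | exact List.not_mem_nil
          | simp [hA1 x hx]
          | simp [hA2 x hx]
          | simp [hA3 x hx]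
          | simp [hA4r x hx]
          | simp [hB1 x hx]
          | simp [hB2 x hx])

/-- Let `W` be a wheel with center `w` whose rim cycle passes through the
distinct spoke-neighbors `w1, w2, w3, w4` of `w` in this cyclic order, and let `P1, P2`
be disjoint paths from `w1` to `w3` and from `w2` to `w4` respectively, each internally
disjoint from `W`.  Then `W ∪ P1 ∪ P2` contains a subdivision of `K5`. -/
theorem statement8 {V : Type} (G : SimpleGraph V) (w w1 w2 w3 w4 : V)
    (hdist : List.Pairwise (· ≠ ·) [w, w1, w2, w3, w4])
    (Q1 : G.Walk w1 w2) (Q2 : G.Walk w2 w3) (Q3 : G.Walk w3 w4) (Q4 : G.Walk w4 w1)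
    (C : G.Walk w1 w1) (hC : C = Q1.append (Q2.append (Q3.append Q4)))
    (hcyc : C.IsCycle) (hwC : w ∉ C.support)
    (W : G.Subgraph) (T : Set V)
    (hTsub : T ⊆ {x | x ∈ C.support}) (hT3 : 3 ≤ T.ncard)
    (hspokes : {w1, w2, w3, w4} ⊆ T)
    (hWv : W.verts = insert w {x | x ∈ C.support})
    (hWe : W.edgeSet = {e | e ∈ C.edges} ∪ (fun x => s(w, x)) '' T)
    (P1 : G.Walk w1 w3) (P2 : G.Walk w2 w4)
    (hP1 : P1.IsPath) (hP2 : P2.IsPath)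
    (hdisj : ∀ x ∈ P1.support, x ∉ P2.support)
    (hint1 : ∀ x ∈ walkInterior P1, x ∉ W.verts)
    (hint2 : ∀ x ∈ walkInterior P2, x ∉ W.verts) :
    HasK5Subdivision (W ⊔ P1.toSubgraph ⊔ P2.toSubgraph).spanningCoe := by
  simp only [List.pairwise_cons, List.mem_cons, List.not_mem_nil, or_false, forall_eq_or_imp,
    forall_eq] at hdist
  obtain ⟨⟨n01, n02, n03, n04⟩, ⟨n12, n13, n14⟩, ⟨n23, n24⟩, n34, -⟩ := hdist
  have sQ1 := support_eq_cons_interior Q1 n12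
  have sQ2 := support_eq_cons_interior Q2 n23
  have sQ3 := support_eq_cons_interior Q3 n34
  have sQ4 := support_eq_cons_interior Q4 n14.symm
  have sP1 := support_eq_cons_interior P1 n13
  have sP2 := support_eq_cons_interior P2 n24
  have htail : C.support.tail = walkInterior Q1 ++ [w2] ++ (walkInterior Q2 ++ [w3] ++
      (walkInterior Q3 ++ [w4] ++ (walkInterior Q4 ++ [w1]))) := by
    rw [hC, Walk.tail_support_append, Walk.tail_support_append, Walk.tail_support_append,
      sQ1, sQ2, sQ3, sQ4]
    rfl
  have hCs : C.support = w1 :: (walkInterior Q1 ++ [w2] ++ (walkInterior Q2 ++ [w3] ++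
      (walkInterior Q3 ++ [w4] ++ (walkInterior Q4 ++ [w1])))) := by
    rw [← htail, Walk.cons_tail_support]
  have hnd := hcyc.support_nodup
  rw [htail] at hnd
  have ndP1 := hP1.support_nodup
  have ndP2 := hP2.support_nodup
  rw [sP1] at ndP1
  rw [sP2] at ndP2
  rw [sP1, sP2] at hdisj
  rw [hWv, hCs] at hint1 hint2
  rw [hCs] at hwC
  set H := (W ⊔ P1.toSubgraph ⊔ P2.toSubgraph).spanningCoe with hH
  have hHW : ∀ e ∈ W.edgeSet, e ∈ H.edgeSet := by
    intro e he
    rw [hH, Subgraph.edgeSet_spanningCoe, Subgraph.edgeSet_sup, Subgraph.edgeSet_sup]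
    exact Or.inl (Or.inl he)
  have hHC : ∀ e ∈ C.edges, e ∈ H.edgeSet := fun e he => hHW e (by rw [hWe]; exact Or.inl he)
  have hHP1 : ∀ e ∈ P1.edges, e ∈ H.edgeSet := by
    intro e he
    rw [hH, Subgraph.edgeSet_spanningCoe, Subgraph.edgeSet_sup, Subgraph.edgeSet_sup]
    exact Or.inl (Or.inr ((Walk.mem_edges_toSubgraph P1).2 he))
  have hHP2 : ∀ e ∈ P2.edges, e ∈ H.edgeSet := by
    intro e he
    rw [hH, Subgraph.edgeSet_spanningCoe, Subgraph.edgeSet_sup, Subgraph.edgeSet_sup]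
    exact Or.inr ((Walk.mem_edges_toSubgraph P2).2 he)
  have hspoke : ∀ x ∈ ({w1, w2, w3, w4} : Set V), H.Adj x w := by
    intro x hx
    have : s(w, x) ∈ H.edgeSet := hHW _ (by rw [hWe]; exact Or.inr ⟨x, hspokes hx, rfl⟩)
    exact (H.mem_edgeSet.1 this).symm
  have hspokeWalk : ∀ x ∈ ({w1, w2, w3, w4} : Set V),
      ∃ p : H.Walk x w, p.support = x :: ([] ++ [w]) :=
    fun x hx => ⟨(hspoke x hx).toWalk, by simp⟩
  have eQ1 : ∃ p : H.Walk w1 w2, p.support = w1 :: (walkInterior Q1 ++ [w2]) :=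
    ⟨Q1.transfer H fun e he => hHC e (by rw [hC]; simp [he]), by rw [Walk.support_transfer, sQ1]⟩
  have eQ2 : ∃ p : H.Walk w2 w3, p.support = w2 :: (walkInterior Q2 ++ [w3]) :=
    ⟨Q2.transfer H fun e he => hHC e (by rw [hC]; simp [he]), by rw [Walk.support_transfer, sQ2]⟩
  have eQ3 : ∃ p : H.Walk w3 w4, p.support = w3 :: (walkInterior Q3 ++ [w4]) :=
    ⟨Q3.transfer H fun e he => hHC e (by rw [hC]; simp [he]), by rw [Walk.support_transfer, sQ3]⟩
  have eQ4 : ∃ p : H.Walk w1 w4, p.support = w1 :: ((walkInterior Q4).reverse ++ [w4]) :=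
    ⟨(Q4.transfer H fun e he => hHC e (by rw [hC]; simp [he])).reverse, by
      rw [Walk.support_reverse, Walk.support_transfer, sQ4]; simp⟩
  have eP1 : ∃ p : H.Walk w1 w3, p.support = w1 :: (walkInterior P1 ++ [w3]) :=
    ⟨P1.transfer H hHP1, by rw [Walk.support_transfer, sP1]⟩
  have eP2 : ∃ p : H.Walk w2 w4, p.support = w2 :: (walkInterior P2 ++ [w4]) :=
    ⟨P2.transfer H hHP2, by rw [Walk.support_transfer, sP2]⟩
  exact hasK5Subdivision_of_wheel_interiors H ⟨n01, n02, n03, n04⟩ ⟨n12, n13, n14, n23, n24, n34⟩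
    hspokeWalk eQ1 eQ2 eQ3 eQ4 eP1 eP2 hnd hwC ndP1 ndP2 hdisj hint1 hint2
end

section
/- Let G be a graph containing distinct vertices u, v, v1, v2, v3, v4 such that N_G(u) = {v1, v2, v3, v} and N_G(v) = {v1, v3, v4, u}. If the graph G − {u, v} + v2v4 is 4-colorable, then G is 4-colorable. -/
/-!
A 4-coloring `c` of `G − {u, v} + v2v4` satisfies `c v2 ≠ c v4` and is proper on all edges of `G`
avoiding `u` and `v`, so it only has to be extended to `u` and `v`. The vertex `u` must avoid the
colors of `v1, v2, v3`, the vertex `v` those of `v1, v3, v4`, and the two must differ. Since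
`c v2 ≠ c v4`, such a pair of colors exists (`exists_extension_colors`).
-/

open SimpleGraph

/-- The two deleted vertices can be colored: `a` and `b` are the colors for `u` and `v`. If
`c1 = c3` each has at least two admissible colors; otherwise both choose from the two colors
outside `{c1, c3}`, and they could be forced to the same one only if `c2 = c4`. -/
lemma exists_extension_colors : ∀ c1 c2 c3 c4 : Fin 4, c2 ≠ c4 →
    ∃ a b : Fin 4, a ≠ b ∧ a ≠ c1 ∧ a ≠ c2 ∧ a ≠ c3 ∧ b ≠ c1 ∧ b ≠ c3 ∧ b ≠ c4 := by
  decide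

/-- If `N_G(u) = {v1, v2, v3, v}` and `N_G(v) = {v1, v3, v4, u}` and
`G − {u, v} + v2v4` is 4-colorable, then `G` is 4-colorable. -/
theorem statement9 {V : Type} (G : SimpleGraph V) (u v v1 v2 v3 v4 : V)
    (hdist : List.Pairwise (· ≠ ·) [u, v, v1, v2, v3, v4])
    (hu : G.neighborSet u = {v1, v2, v3, v})
    (hv : G.neighborSet v = {v1, v3, v4, u})
    (hcol : (deleteAdd G {u, v} {(v2, v4)}).Colorable 4) :
    G.Colorable 4 := by
  classical
  obtain ⟨c⟩ := hcol
  simp only [List.pairwise_cons, List.mem_cons, List.not_mem_nil, or_false, forall_eq_or_imp,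
    forall_eq] at hdist
  obtain ⟨⟨huv, hu1, hu2, hu3, hu4⟩, ⟨hv1, hv2, hv3, hv4⟩, -, ⟨-, h24⟩, -⟩ := hdist
  have hc24 : c v2 ≠ c v4 := c.valid (by simp [deleteAdd, h24])
  have hc : ∀ x y, G.Adj x y → x ≠ u → x ≠ v → y ≠ u → y ≠ v → c x ≠ c y := by
    intro x y h hxu hxv hyu hyv
    exact c.valid (by simp [deleteAdd, h, h.ne, hxu, hxv, hyu, hyv])
  have hNu : ∀ y, G.Adj u y → y = v1 ∨ y = v2 ∨ y = v3 ∨ y = v := fun y h => by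
    simpa [hu] using (G.mem_neighborSet u y).2 h
  have hNv : ∀ y, G.Adj v y → y = v1 ∨ y = v3 ∨ y = v4 ∨ y = u := fun y h => by
    simpa [hv] using (G.mem_neighborSet v y).2 h
  obtain ⟨a, b, hab, ha1, ha2, ha3, hb1, hb3, hb4⟩ :=
    exists_extension_colors (c v1) (c v2) (c v3) (c v4) hc24
  refine ⟨Coloring.mk (fun x => if x = u then a else if x = v then b else c x) ?_⟩
  intro x y h
  have h' := h.symm
  have hne := h.ne
  by_cases hxu : x = u
  · subst hxu
    rcases hNu y h with rfl | rfl | rfl | rfl <;> grind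
  by_cases hyu : y = u
  · subst hyu
    rcases hNu x h' with rfl | rfl | rfl | rfl <;> grind
  by_cases hxv : x = v
  · subst hxv
    rcases hNv y h with rfl | rfl | rfl | rfl <;> grind
  by_cases hyv : y = v
  · subst hyv
    rcases hNv x h' with rfl | rfl | rfl | rfl <;> grind
  simpa [hxu, hyu, hxv, hyv] using hc x y h hxu hxv hyu hyv
end

section
/- Let G be a graph containing distinct vertices u, v, v1, v2, v3, v4 such that N_G(u) = {v1, v2, v3, v} and N_G(v) = {v1, v3, v4, u}. If the graph G − {u, v} + v2v4 contains a subdivision of K5, then G contains a subdivision of K5. -/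
/-!
The hypotheses provide the path `v2 - u - v - v4` in `G`, and `u`, `v` are isolated in
`G − {u, v} + v2v4`. Hence no branch vertex and no path of the given subdivision meets `u` or `v`,
and replacing the edge `v2v4` by the path `v2 - u - v - v4` turns every path of the
subdivision into a path of `G` (`exists_reroute`). Only `u` and `v` can be new vertices, and they
occur only on paths using the edge `v2v4`. There is at most one such path: a vertex common to
two paths of the subdivision is an end of both, and two distinct paths share at most one end.
-/

open SimpleGraph

/-- For a path, `walkInterior` is the support without the two ends. -/
lemma mem_walkInterior_iff {V : Type} {G : SimpleGraph V} {a b : V} {p : G.Walk a b}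
    (hp : p.IsPath) (x : V) : x ∈ walkInterior p ↔ x ∈ p.support ∧ x ≠ a ∧ x ≠ b := by
  have hnd := hp.support_nodup
  rcases p with _ | ⟨h, q⟩
  · simp [walkInterior]
  · have hq : q.support = q.support.dropLast ++ [b] := by
      conv_lhs => rw [← List.dropLast_append_getLast q.support_ne_nil]
      rw [q.getLast_support]
    simp only [walkInterior, Walk.support_cons, List.tail_cons]
    rw [Walk.support_cons, hq] at hnd
    rw [hq]
    simp only [List.dropLast_concat]
    generalize q.support.dropLast = l at hnd
    simp only [List.nodup_cons, List.nodup_append, List.mem_append, List.mem_cons] at hnd ⊢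
    grind

lemma eq_of_walk_of_isolated {V : Type} {H : SimpleGraph V} {u b : V}
    (hu : ∀ w, ¬ H.Adj u w) (p : H.Walk u b) : b = u := by
  cases p with
  | nil => rfl
  | cons h _ => exact (hu _ h).elim

lemma notMem_support_of_isolated {V : Type} {H : SimpleGraph V} {u a b : V}
    (hu : ∀ w, ¬ H.Adj u w) (p : H.Walk a b) (hab : a ≠ b) : u ∉ p.support := by
  classical
  intro h
  exact hab ((eq_of_walk_of_isolated hu (p.takeUntil u h).reverse).trans
    (eq_of_walk_of_isolated hu (p.dropUntil u h)).symm)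

/-- Replacing the edge `cd` of a path by `c - u - v - d` yields a path in `G` whose only possible
new vertices are `u` and `v`, and these occur only if the edge `cd` was used. -/
lemma exists_reroute {V : Type} {G H : SimpleGraph V} {u v c d : V}
    (hcu : G.Adj c u) (huv : G.Adj u v) (hvd : G.Adj v d)
    (hH : ∀ x y, H.Adj x y → G.Adj x y ∨ s(x, y) = s(c, d))
    {a b : V} (p : H.Walk a b) (hp : p.IsPath) (hu : u ∉ p.support) (hv : v ∉ p.support) :
    ∃ q : G.Walk a b, q.IsPath ∧
      ∀ x ∈ q.support, x ∈ p.support ∨ ((x = u ∨ x = v) ∧ s(c, d) ∈ p.edges) := by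
  induction p with
  | nil => exact ⟨Walk.nil, Walk.IsPath.nil, by simp⟩
  | @cons a y b h p ih =>
    rw [Walk.cons_isPath_iff] at hp
    rw [Walk.support_cons, List.mem_cons, not_or] at hu hv
    obtain ⟨q, hq, hqs⟩ := ih hp.1 hu.2 hv.2
    by_cases he : s(a, y) = s(c, d)
    · -- a path traverses the edge `cd` at most once, so the rest `q` avoids `u` and `v`
      have hne : s(c, d) ∉ p.edges := fun hmem =>
        hp.2 (p.fst_mem_support_of_mem_edges (he ▸ hmem))
      have hqs' : ∀ x ∈ q.support, x ∈ p.support := fun x hx =>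
        (hqs x hx).resolve_right fun h => hne h.2
      have hmem : s(c, d) ∈ (Walk.cons h p).edges := by simp [← he]
      have haq : a ∉ q.support := fun h => hp.2 (hqs' _ h)
      have huq : u ∉ q.support := fun h => hu.2 (hqs' _ h)
      have hvq : v ∉ q.support := fun h => hv.2 (hqs' _ h)
      have hne_uv : u ≠ v := huv.ne
      rcases Sym2.eq_iff.1 he with ⟨rfl, rfl⟩ | ⟨rfl, rfl⟩
      · refine ⟨.cons hcu (.cons huv (.cons hvd q)), ?_, ?_⟩
        · simp only [Walk.cons_isPath_iff, Walk.support_cons, List.mem_cons]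
          grind
        · simp only [Walk.support_cons, List.mem_cons]
          grind
      · refine ⟨.cons hvd.symm (.cons huv.symm (.cons hcu.symm q)), ?_, ?_⟩
        · simp only [Walk.cons_isPath_iff, Walk.support_cons, List.mem_cons]
          grind
        · simp only [Walk.support_cons, List.mem_cons]
          grind
    · refine ⟨.cons ((hH _ _ h).resolve_right he) q, ?_, ?_⟩
      · rw [Walk.cons_isPath_iff]
        refine ⟨hq, fun hmem => ?_⟩
        rcases hqs _ hmem with h | ⟨h | h, -⟩
        · exact hp.2 h
        · exact hu.1 h.symm
        · exact hv.1 h.symm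
      · simp only [Walk.support_cons, Walk.edges_cons, List.mem_cons]
        grind

/-- If `N_G(u) = {v1, v2, v3, v}` and `N_G(v) = {v1, v3, v4, u}` and
`G − {u, v} + v2v4` contains a subdivision of `K5`, then so does `G`. -/
theorem statement10 {V : Type} (G : SimpleGraph V) (u v v1 v2 v3 v4 : V)
    (hdist : List.Pairwise (· ≠ ·) [u, v, v1, v2, v3, v4])
    (hu : G.neighborSet u = {v1, v2, v3, v})
    (hv : G.neighborSet v = {v1, v3, v4, u})
    (hsub : HasK5Subdivision (deleteAdd G {u, v} {(v2, v4)})) :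
    HasK5Subdivision G := by
  have huv : G.Adj u v := by
    have : v ∈ G.neighborSet u := by simp [hu]
    exact this
  have hcu : G.Adj v2 u := by
    have : v2 ∈ G.neighborSet u := by simp [hu]
    exact this.symm
  have hvd : G.Adj v v4 := by
    have : v4 ∈ G.neighborSet v := by simp [hv]
    exact this
  simp only [List.pairwise_cons, List.mem_cons] at hdist
  have hcd : v2 ≠ v4 := by grind
  have hu2 : u ≠ v2 := by grind
  have hu4 : u ≠ v4 := by grind
  have hv2 : v ≠ v2 := by grind
  have hv4 : v ≠ v4 := by grind
  clear hdist
  have hH : ∀ x y, (deleteAdd G {u, v} {(v2, v4)}).Adj x y →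
      G.Adj x y ∨ s(x, y) = s(v2, v4) := by
    intro x y h
    simp only [deleteAdd, SimpleGraph.fromRel_adj, Set.mem_singleton_iff, Prod.mk.injEq] at h
    rw [Sym2.eq_iff]
    have := G.adj_comm x y
    tauto
  have hisou : ∀ w, ¬ (deleteAdd G {u, v} {(v2, v4)}).Adj u w := by
    intro w h
    simp [deleteAdd, hu2, hu4] at h
  have hisov : ∀ w, ¬ (deleteAdd G {u, v} {(v2, v4)}).Adj v w := by
    intro w h
    simp [deleteAdd, hv2, hv4] at h
  generalize deleteAdd G {u, v} {(v2, v4)} = H at *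
  obtain ⟨b, hb, P, hP, hPb, hPd⟩ := hsub
  have hne : ∀ {i j : Fin 5}, i < j → b i ≠ b j := fun h e => h.ne (hb e)
  have hPu : ∀ i j, i < j → u ∉ (P i j).support := fun i j h =>
    notMem_support_of_isolated hisou _ (hne h)
  have hPv : ∀ i j, i < j → v ∉ (P i j).support := fun i j h =>
    notMem_support_of_isolated hisov _ (hne h)
  -- every branch vertex is an end of some path of the subdivision, so it is neither `u` nor `v`
  have hbs : ∀ k : Fin 5, ∃ i j, i < j ∧ b k ∈ (P i j).support := by
    intro k
    by_cases hk : k = 0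
    · subst hk
      exact ⟨0, 1, by decide, Walk.start_mem_support _⟩
    · exact ⟨0, k, Fin.pos_of_ne_zero hk, Walk.end_mem_support _⟩
  have hbu : ∀ k, b k ≠ u := fun k e => by
    obtain ⟨i, j, h, hm⟩ := hbs k
    exact hPu i j h (e ▸ hm)
  have hbv : ∀ k, b k ≠ v := fun k e => by
    obtain ⟨i, j, h, hm⟩ := hbs k
    exact hPv i j h (e ▸ hm)
  have hshare : ∀ i j i' j' : Fin 5, i < j → i' < j' → (i, j) ≠ (i', j') →
      ∀ x, x ∈ (P i j).support → x ∈ (P i' j').support → x = b i ∨ x = b j := by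
    intro i j i' j' h h' hn x hx hx'
    by_contra hc
    rw [not_or] at hc
    exact hPd i j i' j' h h' hn x ((mem_walkInterior_iff (hP i j h) x).2 ⟨hx, hc⟩) hx'
  have huniq : ∀ i j i' j' : Fin 5, i < j → i' < j' → s(v2, v4) ∈ (P i j).edges →
      s(v2, v4) ∈ (P i' j').edges → (i, j) = (i', j') := by
    intro i j i' j' h h' he he'
    by_contra hn
    have h1 := (P i j).fst_mem_support_of_mem_edges he
    have h2 := (P i j).snd_mem_support_of_mem_edges he
    have h1' := (P i' j').fst_mem_support_of_mem_edges he'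
    have h2' := (P i' j').snd_mem_support_of_mem_edges he'
    have a1 := hshare i j i' j' h h' hn _ h1 h1'
    have a2 := hshare i j i' j' h h' hn _ h2 h2'
    have a1' := hshare i' j' i j h' h (Ne.symm hn) _ h1' h1
    have a2' := hshare i' j' i j h' h (Ne.symm hn) _ h2' h2
    have hinj : ∀ k l, b k = b l → k = l := fun k l e => hb e
    rw [Prod.mk.injEq] at hn
    grind
  have hex : ∀ i j : Fin 5, ∃ q : G.Walk (b i) (b j), i < j → q.IsPath ∧
      ∀ x ∈ q.support, x ∈ (P i j).support ∨
        ((x = u ∨ x = v) ∧ s(v2, v4) ∈ (P i j).edges) := by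
    have key : ∀ i j : Fin 5, i < j → ∃ q : G.Walk (b i) (b j), q.IsPath ∧
        ∀ x ∈ q.support, x ∈ (P i j).support ∨
          ((x = u ∨ x = v) ∧ s(v2, v4) ∈ (P i j).edges) := fun i j h =>
      exists_reroute hcu huv hvd hH (P i j) (hP i j h) (hPu i j h) (hPv i j h)
    intro i j
    rcases lt_trichotomy i j with h | rfl | h
    · obtain ⟨q, hq⟩ := key i j h
      exact ⟨q, fun _ => hq⟩
    · exact ⟨Walk.nil, fun h => (lt_irrefl _ h).elim⟩
    · obtain ⟨q, -⟩ := key j i h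
      exact ⟨q.reverse, fun h' => (lt_asymm h h').elim⟩
  choose Q hQ using hex
  refine ⟨b, hb, Q, fun i j h => (hQ i j h).1, ?_, ?_⟩
  · intro i j h k hk
    rw [mem_walkInterior_iff (hQ i j h).1] at hk
    rcases (hQ i j h).2 _ hk.1 with hm | ⟨hm | hm, -⟩
    · exact hPb i j h k ((mem_walkInterior_iff (hP i j h) _).2 ⟨hm, hk.2⟩)
    · exact hbu k hm
    · exact hbv k hm
  · intro i j i' j' h h' hn x hx hx'
    rw [mem_walkInterior_iff (hQ i j h).1] at hx
    have ux := hPu i j h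
    have vx := hPv i j h
    have ux' := hPu i' j' h'
    have vx' := hPv i' j' h'
    rcases (hQ i j h).2 _ hx.1 with hm | ⟨hm, he⟩ <;>
      rcases (hQ i' j' h').2 _ hx' with hm' | ⟨hm', he'⟩
    · exact hPd i j i' j' h h' hn x ((mem_walkInterior_iff (hP i j h) x).2 ⟨hm, hx.2⟩) hm'
    · rcases hm' with rfl | rfl <;> contradiction
    · rcases hm with rfl | rfl <;> contradiction
    · exact hn (huniq i j i' j' h h' he he')
end
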